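/- Exact matching rate in the dual service-range model with zero base range: Fix b > 0 and p ∈ (0,1). In the dual service-range model with base range 0, the expected maximum matching size satisfies lim_{n→∞} ν_n(0, b, p)/n = (e^{2pb} − e^{2b}) / (e^{2pb} − (1/p)·e^{2b}). -/

import Mathlib

open MeasureTheory
open scoped Classical

noncomputable section

/-- A matching of a bipartite compatibility relation, given as a finite set of
supply-demand pairs with compatible endpoints and pairwise distinct coordinates. -/
def IsBipMatching {a b : ℕ} (adj : Fin a → Fin b → Prop) (M : Finset (Fin a × Fin b)) : Prop :=
  (∀ e ∈ M, adj e.1 e.2) ∧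
    ∀ e ∈ M, ∀ e' ∈ M, e ≠ e' → e.1 ≠ e'.1 ∧ e.2 ≠ e'.2

/-- The maximum cardinality of a matching of the bipartite compatibility relation. -/
def matchingNumber {a b : ℕ} (adj : Fin a → Fin b → Prop) : ℕ :=
  sSup {c | ∃ M : Finset (Fin a × Fin b), IsBipMatching adj M ∧ M.card = c}

/-- The uniform probability measure on `[0,1]`. -/
def unifI : Measure ℝ := volume.restrict (Set.Icc (0 : ℝ) 1)

/-- The expected maximum matching size `ν_n(r, b, p)` in the dual service-range model:
`n` supply and `n` demand nodes i.i.d. uniform on `[0,1]`; exactly `⌊pn⌋` supply nodes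
are flexible with range `r + b`, the rest have range `r`; supply `i` serves demand `j`
iff `|s_i - d_j| ≤ r_i / n`. -/
def nuDual (n : ℕ) (r b p : ℝ) : ℝ :=
  ∫ S : Fin n → ℝ, ∫ D : Fin n → ℝ,
      (matchingNumber (fun i j : Fin n =>
        |S i - D j| ≤ (if (i : ℕ) < Nat.floor (p * n) then r + b else r) / (n : ℝ)) : ℝ)
    ∂(Measure.pi fun _ => unifI) ∂(Measure.pi fun _ => unifI)

/-!
Divide `[0, 1]` into `n ^ 2` cells. Up to `O(√n)` in expectation, all nodes lie in distinct cells of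
their kind, whether two nodes are joined depends only on the indices of their cells, and the
occupied cells may be taken to be independent: a cell contains a flexible supply node with
probability `α = p / n` and a demand node with probability `β = 1 / n`, and two nodes are joined
when their cells are at distance at most `w = ⌊b n⌋`.

On such a line of cells it is optimal to match the leftmost supply node with the leftmost demand
node whenever they are joined, and to discard the one further left otherwise. The expected matching
number therefore satisfies a recursion in the positions of the current supply and demand cells. An
affine plus geometric function of their offset solves this recursion with a constant gain per cell,
and a maximum principle shows that the boundary costs only a constant. The gain is explicit in
`((1 - β) / (1 - α)) ^ (2 * w + 1)`, which tends to `exp (2 * (p - 1) * b)`.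
-/

open Finset Filter Topology
open scoped BigOperators

/-! ### Matching numbers -/

namespace IsBipMatching

variable {a b : ℕ} {adj adj' : Fin a → Fin b → Prop} {M N : Finset (Fin a × Fin b)}

theorem injOn_fst (hM : IsBipMatching adj M) : Set.InjOn Prod.fst (M : Set (Fin a × Fin b)) :=
  fun e he e' he' h => by_contra fun hne => (hM.2 e he e' he' hne).1 h

theorem injOn_snd (hM : IsBipMatching adj M) : Set.InjOn Prod.snd (M : Set (Fin a × Fin b)) :=
  fun e he e' he' h => by_contra fun hne => (hM.2 e he e' he' hne).2 h

theorem of_injOn (hadj : ∀ e ∈ M, adj e.1 e.2)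
    (hfst : Set.InjOn Prod.fst (M : Set (Fin a × Fin b)))
    (hsnd : Set.InjOn Prod.snd (M : Set (Fin a × Fin b))) : IsBipMatching adj M :=
  ⟨hadj, fun _ he _ he' hne => ⟨fun h => hne (hfst he he' h), fun h => hne (hsnd he he' h)⟩⟩

theorem subset (hM : IsBipMatching adj M) (hNM : N ⊆ M) (hN : ∀ e ∈ N, adj' e.1 e.2) :
    IsBipMatching adj' N :=
  ⟨hN, fun e he e' he' => hM.2 e (hNM he) e' (hNM he')⟩

theorem insert_edge (hM : IsBipMatching adj M) {i : Fin a} {j : Fin b} (hij : adj i j)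
    (hi : ∀ e ∈ M, e.1 ≠ i) (hj : ∀ e ∈ M, e.2 ≠ j) :
    IsBipMatching adj (insert (i, j) M) := by
  refine ⟨forall_mem_insert _ _ _ |>.2 ⟨hij, hM.1⟩, fun e he e' he' hne => ?_⟩
  rcases mem_insert.1 he with rfl | he <;> rcases mem_insert.1 he' with rfl | he'
  · exact absurd rfl hne
  · exact ⟨(hi e' he').symm, (hj e' he').symm⟩
  · exact ⟨hi e he, hj e he⟩
  · exact hM.2 e he e' he' hne

theorem card_le_matchingNumber (hM : IsBipMatching adj M) : #M ≤ matchingNumber adj :=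
  le_csSup ⟨Fintype.card (Fin a × Fin b), by rintro _ ⟨M, -, rfl⟩; exact card_le_univ M⟩
    ⟨M, hM, rfl⟩

end IsBipMatching

section MatchingNumber

variable {a b a' b' : ℕ} {adj adj' : Fin a → Fin b → Prop}

theorem exists_isBipMatching_card_eq (adj : Fin a → Fin b → Prop) :
    ∃ M, IsBipMatching adj M ∧ #M = matchingNumber adj :=
  Nat.sSup_mem (s := {c | ∃ M, IsBipMatching adj M ∧ #M = c})
    ⟨0, ∅, ⟨by simp, by simp⟩, card_empty⟩
    ⟨Fintype.card (Fin a × Fin b), by rintro _ ⟨M, -, rfl⟩; exact card_le_univ M⟩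

theorem matchingNumber_le {c : ℕ} (h : ∀ M, IsBipMatching adj M → #M ≤ c) :
    matchingNumber adj ≤ c := by
  obtain ⟨M, hM, hcard⟩ := exists_isBipMatching_card_eq adj
  exact hcard ▸ h M hM

theorem matchingNumber_le_left (adj : Fin a → Fin b → Prop) : matchingNumber adj ≤ a :=
  matchingNumber_le fun M hM => by
    simpa using card_le_card_of_injOn (t := univ) Prod.fst (by simp) hM.injOn_fst

theorem matchingNumber_mono (h : ∀ i j, adj i j → adj' i j) :
    matchingNumber adj ≤ matchingNumber adj' :=
  matchingNumber_le fun _ hM =>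
    (hM.subset Subset.rfl fun e he => h _ _ (hM.1 e he)).card_le_matchingNumber

theorem matchingNumber_le_add_edges (T : Finset (Fin a × Fin b))
    (h : ∀ i j, adj i j → adj' i j ∨ (i, j) ∈ T) :
    matchingNumber adj ≤ matchingNumber adj' + #T := by
  refine matchingNumber_le fun M hM => (card_le_card_sdiff_add_card (t := T)).trans ?_
  gcongr
  refine (hM.subset (sdiff_subset (t := T)) fun e he => ?_).card_le_matchingNumber
  exact (h _ _ (hM.1 e (mem_sdiff.1 he).1)).resolve_right (mem_sdiff.1 he).2

theorem matchingNumber_le_add_verts (X : Finset (Fin a)) (Y : Finset (Fin b))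
    (h : ∀ i j, adj i j → adj' i j ∨ i ∈ X ∨ j ∈ Y) :
    matchingNumber adj ≤ matchingNumber adj' + #X + #Y := by
  refine matchingNumber_le fun M hM => ?_
  have hX : #{e ∈ M | e.1 ∈ X} ≤ #X :=
    card_le_card_of_injOn Prod.fst (fun e he => (mem_filter.1 he).2)
      (hM.injOn_fst.mono (coe_subset.2 (filter_subset _ _)))
  have hY : #{e ∈ M | e.2 ∈ Y} ≤ #Y :=
    card_le_card_of_injOn Prod.snd (fun e he => (mem_filter.1 he).2)
      (hM.injOn_snd.mono (coe_subset.2 (filter_subset _ _)))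
  have hrest : #{e ∈ M | ¬(e.1 ∈ X ∨ e.2 ∈ Y)} ≤ matchingNumber adj' := by
    refine (hM.subset (filter_subset _ _) fun e he => ?_).card_le_matchingNumber
    rw [mem_filter] at he
    exact (h _ _ (hM.1 e he.1)).resolve_right he.2
  have hor : #{e ∈ M | e.1 ∈ X ∨ e.2 ∈ Y} ≤ #X + #Y := by
    rw [filter_or]
    exact (card_union_le _ _).trans (add_le_add hX hY)
  have hsplit := card_filter_add_card_filter_not (s := M) fun e => e.1 ∈ X ∨ e.2 ∈ Y
  omega

section Image

variable {S : Finset (Fin a)} {T : Finset (Fin b)} {f : Fin a → Fin a'} {g : Fin b → Fin b'}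

theorem matchingNumber_le_image (hf : Set.InjOn f S) (hg : Set.InjOn g T)
    (r : Fin a' → Fin b' → Prop) :
    matchingNumber (fun i j => i ∈ S ∧ j ∈ T ∧ r (f i) (g j)) ≤
      matchingNumber fun i j => i ∈ S.image f ∧ j ∈ T.image g ∧ r i j := by
  refine matchingNumber_le fun M hM => ?_
  have hfst : Set.InjOn (f ∘ Prod.fst) (M : Set (Fin a × Fin b)) :=
    hf.comp hM.injOn_fst fun e he => (hM.1 e he).1
  have hsnd : Set.InjOn (g ∘ Prod.snd) (M : Set (Fin a × Fin b)) :=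
    hg.comp hM.injOn_snd fun e he => (hM.1 e he).2.1
  have hcard : #(M.image (Prod.map f g)) = #M :=
    card_image_of_injOn fun e he e' he' h => hfst he he' (congrArg Prod.fst h)
  refine hcard ▸ (IsBipMatching.of_injOn (fun e he => ?_) ?_ ?_).card_le_matchingNumber
  · obtain ⟨e', he', rfl⟩ := mem_image.1 he
    obtain ⟨hS, hT, hr⟩ := hM.1 e' he'
    exact ⟨mem_image_of_mem f hS, mem_image_of_mem g hT, hr⟩
  · rw [coe_image]
    rintro _ ⟨e, he, rfl⟩ _ ⟨e', he', rfl⟩ h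
    rw [hfst he he' h]
  · rw [coe_image]
    rintro _ ⟨e, he, rfl⟩ _ ⟨e', he', rfl⟩ h
    rw [hsnd he he' h]

theorem matchingNumber_image_le (hf : Set.InjOn f S) (hg : Set.InjOn g T)
    (r : Fin a' → Fin b' → Prop) :
    matchingNumber (fun i j => i ∈ S.image f ∧ j ∈ T.image g ∧ r i j) ≤
      matchingNumber fun i j => i ∈ S ∧ j ∈ T ∧ r (f i) (g j) := by
  refine matchingNumber_le fun M hM => ?_
  set N := {e ∈ S ×ˢ T | Prod.map f g e ∈ M} with hN
  have mem_N {e} : e ∈ N ↔ (e.1 ∈ S ∧ e.2 ∈ T) ∧ (f e.1, g e.2) ∈ M := by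
    rw [hN, mem_filter, mem_product]; rfl
  have hMN : M ⊆ N.image (Prod.map f g) := fun e he => by
    obtain ⟨hS, hT, -⟩ := hM.1 e he
    obtain ⟨i, hi, hie⟩ := mem_image.1 hS
    obtain ⟨j, hj, hje⟩ := mem_image.1 hT
    have hije : (f i, g j) = e := Prod.ext hie hje
    exact mem_image.2 ⟨(i, j), mem_N.2 ⟨⟨hi, hj⟩, hije ▸ he⟩, hije⟩
  refine (card_le_card hMN).trans <| card_image_le.trans <|
    (IsBipMatching.of_injOn (fun e he => ?_) ?_ ?_).card_le_matchingNumber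
  · obtain ⟨⟨hS, hT⟩, he⟩ := mem_N.1 he
    exact ⟨hS, hT, (hM.1 _ he).2.2⟩
  · intro e he e' he' h
    obtain ⟨⟨-, hT⟩, he⟩ := mem_N.1 he
    obtain ⟨⟨-, hT'⟩, he'⟩ := mem_N.1 he'
    exact Prod.ext h (hg hT hT' (congrArg Prod.snd (hM.injOn_fst he he' (congrArg f h))))
  · intro e he e' he' h
    obtain ⟨⟨hS, -⟩, he⟩ := mem_N.1 he
    obtain ⟨⟨hS', -⟩, he'⟩ := mem_N.1 he'
    exact Prod.ext (hf hS hS' (congrArg Prod.fst (hM.injOn_snd he he' (congrArg g h)))) h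

theorem matchingNumber_image (hf : Set.InjOn f S) (hg : Set.InjOn g T)
    (r : Fin a' → Fin b' → Prop) :
    matchingNumber (fun i j => i ∈ S.image f ∧ j ∈ T.image g ∧ r i j) =
      matchingNumber fun i j => i ∈ S ∧ j ∈ T ∧ r (f i) (g j) :=
  (matchingNumber_image_le hf hg r).antisymm (matchingNumber_le_image hf hg r)

end Image

section Greedy

variable {i₀ : Fin a} {j₀ : Fin b}

theorem matchingNumber_add_one_le (h₀ : adj i₀ j₀) :
    matchingNumber (fun i j => i ≠ i₀ ∧ j ≠ j₀ ∧ adj i j) + 1 ≤ matchingNumber adj := by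
  obtain ⟨M, hM, hcard⟩ := exists_isBipMatching_card_eq fun i j => i ≠ i₀ ∧ j ≠ j₀ ∧ adj i j
  have hnot : (i₀, j₀) ∉ M := fun h => (hM.1 _ h).1 rfl
  rw [← hcard, ← card_insert_of_notMem hnot]
  have hM' : IsBipMatching adj M := hM.subset Subset.rfl fun e he => (hM.1 e he).2.2
  exact (hM'.insert_edge h₀ (fun e he => (hM.1 e he).1)
    fun e he => (hM.1 e he).2.1).card_le_matchingNumber

theorem IsBipMatching.filter_ne {M : Finset (Fin a × Fin b)} (hM : IsBipMatching adj M) :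
    IsBipMatching (fun i j => i ≠ i₀ ∧ j ≠ j₀ ∧ adj i j) {e ∈ M | e.1 ≠ i₀ ∧ e.2 ≠ j₀} :=
  hM.subset (filter_subset _ _) fun e he =>
    have he := mem_filter.1 he
    ⟨he.2.1, he.2.2, hM.1 e he.1⟩

theorem IsBipMatching.card_le_of_cross {M : Finset (Fin a × Fin b)} (hM : IsBipMatching adj M)
    {i : Fin a} {j : Fin b} (hj : (i₀, j) ∈ M) (hi : (i, j₀) ∈ M) (hi₀ : i ≠ i₀) (hj₀ : j ≠ j₀)
    (hij : adj i j) :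
    #M ≤ matchingNumber (fun i j => i ≠ i₀ ∧ j ≠ j₀ ∧ adj i j) + 1 := by
  set N := {e ∈ M | e.1 ≠ i₀ ∧ e.2 ≠ j₀}
  have hN_matching : IsBipMatching (fun i j => i ≠ i₀ ∧ j ≠ j₀ ∧ adj i j) N := hM.filter_ne
  have hNi : ∀ e ∈ N, e.1 ≠ i := fun e he h =>
    (mem_filter.1 he).2.2 (congrArg Prod.snd (hM.injOn_fst (mem_filter.1 he).1 hi h))
  have hNj : ∀ e ∈ N, e.2 ≠ j := fun e he h =>
    (mem_filter.1 he).2.1 (congrArg Prod.fst (hM.injOn_snd (mem_filter.1 he).1 hj h))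
  have hins := (hN_matching.insert_edge ⟨hi₀, hj₀, hij⟩ hNi hNj).card_le_matchingNumber
  rw [card_insert_of_notMem fun h => hNi _ h rfl] at hins
  have hMN : M ⊆ insert (i₀, j) (insert (i, j₀) N) := fun e he => by
    by_contra h
    simp only [mem_insert, not_or] at h
    exact h.2.2 (mem_filter.2 ⟨he, fun h₁ => h.1 (hM.injOn_fst he hj h₁),
      fun h₂ => h.2.1 (hM.injOn_snd he hi h₂)⟩)
  have := (card_le_card hMN).trans (card_insert_le _ _)
  have := card_insert_le (i, j₀) N
  omega

theorem IsBipMatching.card_le_of_not_cross {M : Finset (Fin a × Fin b)}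
    (hM : IsBipMatching adj M)
    (hcross : ∀ i j, (i₀, j) ∈ M → (i, j₀) ∈ M → i = i₀ ∨ j = j₀) :
    #M ≤ matchingNumber (fun i j => i ≠ i₀ ∧ j ≠ j₀ ∧ adj i j) + 1 := by
  rw [← card_filter_add_card_filter_not fun e : Fin a × Fin b => e.1 ≠ i₀ ∧ e.2 ≠ j₀]
  refine add_le_add hM.filter_ne.card_le_matchingNumber (card_le_one.2 ?_)
  rintro ⟨i, j⟩ he ⟨i', j'⟩ he'
  obtain ⟨he, h⟩ := mem_filter.1 he
  obtain ⟨he', h'⟩ := mem_filter.1 he'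
  have := hM.injOn_fst he he'
  have := hM.injOn_snd he he'
  grind

theorem matchingNumber_le_add_one (hexch : ∀ i j, adj i₀ j → adj i j₀ → adj i j) :
    matchingNumber adj ≤ matchingNumber (fun i j => i ≠ i₀ ∧ j ≠ j₀ ∧ adj i j) + 1 := by
  refine matchingNumber_le fun M hM => ?_
  by_cases hcross : ∀ i j, (i₀, j) ∈ M → (i, j₀) ∈ M → i = i₀ ∨ j = j₀
  · exact hM.card_le_of_not_cross hcross
  · push Not at hcross
    obtain ⟨i, j, hj, hi, hi₀, hj₀⟩ := hcross
    exact hM.card_le_of_cross hj hi hi₀ hj₀ (hexch i j (hM.1 _ hj) (hM.1 _ hi))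

theorem matchingNumber_eq_add_one (h₀ : adj i₀ j₀)
    (hexch : ∀ i j, adj i₀ j → adj i j₀ → adj i j) :
    matchingNumber adj = matchingNumber (fun i j => i ≠ i₀ ∧ j ≠ j₀ ∧ adj i j) + 1 :=
  (matchingNumber_le_add_one hexch).antisymm (matchingNumber_add_one_le h₀)

end Greedy

end MatchingNumber

/-! ### Bernoulli random subsets -/

section Bernoulli

variable {ι κ : Type*} [Fintype ι]

/-- The expectation of `F A` for a random subset `A` of a finite type that contains each point
independently with probability `α`. -/
def bernoulliExpect (α : ℝ) (F : Finset ι → ℝ) : ℝ :=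
  ∑ A, α ^ #A * (1 - α) ^ (Fintype.card ι - #A) * F A

theorem bernoulliExpect_add (α : ℝ) (F G : Finset ι → ℝ) :
    bernoulliExpect α (fun A => F A + G A) = bernoulliExpect α F + bernoulliExpect α G := by
  simp only [bernoulliExpect, mul_add, sum_add_distrib]

theorem bernoulliExpect_sub (α : ℝ) (F G : Finset ι → ℝ) :
    bernoulliExpect α (fun A => F A - G A) = bernoulliExpect α F - bernoulliExpect α G := by
  simp only [bernoulliExpect, mul_sub, sum_sub_distrib]

theorem bernoulliExpect_const_mul (α c : ℝ) (F : Finset ι → ℝ) :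
    bernoulliExpect α (fun A => c * F A) = c * bernoulliExpect α F := by
  simp only [bernoulliExpect, mul_sum, mul_left_comm]

theorem sum_bernoulli_weight (α : ℝ) :
    ∑ A : Finset ι, α ^ #A * (1 - α) ^ (Fintype.card ι - #A) = 1 := by
  simpa using sum_pow_mul_eq_add_pow α (1 - α) (univ : Finset ι)

theorem bernoulliExpect_const (α c : ℝ) : bernoulliExpect α (fun _ : Finset ι => c) = c := by
  rw [bernoulliExpect, ← sum_mul, sum_bernoulli_weight, one_mul]

theorem bernoulliExpect_expect (α : ℝ) (s : Finset κ) (F : κ → Finset ι → ℝ) :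
    bernoulliExpect α (fun A => 𝔼 k ∈ s, F k A) = 𝔼 k ∈ s, bernoulliExpect α (F k) := by
  simp only [bernoulliExpect, mul_expect, expect_sum_comm]

theorem bernoulliExpect_map_perm (α : ℝ) (F : Finset ι → ℝ) (σ : Equiv.Perm ι) :
    bernoulliExpect α (fun A => F (A.map σ.toEmbedding)) = bernoulliExpect α F :=
  Fintype.sum_equiv σ.finsetCongr _ _ fun A => by simp

theorem bernoulliExpect_eq_insert_add_erase [DecidableEq ι] (α : ℝ) (x : ι) (F : Finset ι → ℝ) :
    bernoulliExpect α F = α * bernoulliExpect α (fun A => F (insert x A)) +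
      (1 - α) * bernoulliExpect α (fun A => F (A.erase x)) := by
  have sum_eq (G : Finset ι → ℝ) :
      ∑ A, G A = ∑ A ∈ (univ.erase x).powerset, (G A + G (insert x A)) := by
    rw [sum_add_distrib, ← sum_powerset_insert (notMem_erase x univ),
      insert_erase (mem_univ x), powerset_univ]
  simp only [bernoulliExpect, sum_eq, mul_sum, ← sum_add_distrib]
  refine sum_congr rfl fun A hA => ?_
  have hx : x ∉ A := fun h => notMem_erase x univ (mem_powerset.1 hA h)
  obtain ⟨d, hd⟩ : ∃ d, Fintype.card ι = #A + 1 + d :=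
    Nat.exists_eq_add_of_le (card_insert_of_notMem hx ▸ card_le_univ (insert x A))
  simp only [insert_idem, erase_insert hx, erase_eq_of_notMem hx, card_insert_of_notMem hx, hd,
    Nat.add_sub_cancel_left, show #A + 1 + d - #A = d + 1 by omega]
  ring

variable {α : ℝ}

theorem bernoulli_weight_nonneg (h₀ : 0 ≤ α) (h₁ : α ≤ 1) (A : Finset ι) :
    0 ≤ α ^ #A * (1 - α) ^ (Fintype.card ι - #A) :=
  mul_nonneg (pow_nonneg h₀ _) (pow_nonneg (sub_nonneg.2 h₁) _)

theorem bernoulliExpect_mono (h₀ : 0 ≤ α) (h₁ : α ≤ 1) {F G : Finset ι → ℝ} (h : ∀ A, F A ≤ G A) :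
    bernoulliExpect α F ≤ bernoulliExpect α G :=
  sum_le_sum fun A _ => mul_le_mul_of_nonneg_left (h A) (bernoulli_weight_nonneg h₀ h₁ A)

theorem abs_bernoulliExpect_le (h₀ : 0 ≤ α) (h₁ : α ≤ 1) (F : Finset ι → ℝ) :
    |bernoulliExpect α F| ≤ bernoulliExpect α fun A => |F A| :=
  (abs_sum_le_sum_abs _ _).trans_eq <| sum_congr rfl fun A _ => by
    rw [abs_mul, abs_of_nonneg (bernoulli_weight_nonneg h₀ h₁ A)]

theorem bernoulliExpect_card_sub_sq (h₀ : 0 ≤ α) (h₁ : α ≤ 1) :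
    bernoulliExpect α (fun A : Finset ι => ((#A : ℝ) - Fintype.card ι * α) ^ 2) =
      Fintype.card ι * α * (1 - α) := by
  set K := Fintype.card ι with hK_def
  rcases eq_or_ne K 0 with hK | hK
  · have : IsEmpty ι := Fintype.card_eq_zero_iff.1 hK
    simp [bernoulliExpect, hK, eq_empty_of_isEmpty]
  have hsum := sum_powerset_apply_card (x := (univ : Finset ι))
    fun k => α ^ k * (1 - α) ^ (K - k) * ((k : ℝ) - K * α) ^ 2
  have hvar := bernstein.variance hK ⟨α, h₀, h₁⟩
  rw [powerset_univ, card_univ, ← hK_def, sum_range] at hsum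
  rw [bernoulliExpect, hsum, show (K : ℝ) * α * (1 - α) = K ^ 2 * (α * (1 - α) / K) by field_simp,
    ← hvar, mul_sum]
  refine sum_congr rfl fun k _ => ?_
  simp only [bernstein_apply, bernstein.z, nsmul_eq_mul]
  field_simp
  ring

theorem bernoulliExpect_abs_card_sub_le_sqrt (h₀ : 0 ≤ α) (h₁ : α ≤ 1) :
    bernoulliExpect α (fun A : Finset ι => |(#A : ℝ) - Fintype.card ι * α|) ≤
      √(Fintype.card ι * α) := by
  refine Real.le_sqrt_of_sq_le ?_
  calc bernoulliExpect α (fun A : Finset ι => |(#A : ℝ) - Fintype.card ι * α|) ^ 2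
      ≤ bernoulliExpect α fun A : Finset ι => |(#A : ℝ) - Fintype.card ι * α| ^ 2 :=
        Real.pow_arith_mean_le_arith_mean_pow_of_even _ _ _
          (fun A _ => bernoulli_weight_nonneg h₀ h₁ A) (sum_bernoulli_weight α) even_two
    _ = Fintype.card ι * α * (1 - α) := by
        simp only [sq_abs, bernoulliExpect_card_sub_sq h₀ h₁]
    _ ≤ Fintype.card ι * α := mul_le_of_le_one_right (by positivity) (by linarith)

theorem bernoulliExpect_abs_card_sub_le (h₀ : 0 ≤ α) (h₁ : α ≤ 1) (k : ℝ) :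
    bernoulliExpect α (fun A : Finset ι => |(#A : ℝ) - k|) ≤
      √(Fintype.card ι * α) + |Fintype.card ι * α - k| := by
  calc bernoulliExpect α (fun A : Finset ι => |(#A : ℝ) - k|)
      ≤ bernoulliExpect α fun A : Finset ι =>
          |(#A : ℝ) - Fintype.card ι * α| + |Fintype.card ι * α - k| :=
        bernoulliExpect_mono h₀ h₁ fun A => abs_sub_le _ _ _
    _ ≤ _ := by
        rw [bernoulliExpect_add, bernoulliExpect_const]
        gcongr
        exact bernoulliExpect_abs_card_sub_le_sqrt h₀ h₁

end Bernoulli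

/-! ### Random maps and collisions -/

section RandomMap

variable {ι κ : Type*}

theorem exists_subset_injOn_image_eq [DecidableEq ι] (S : Finset κ) (c : κ → ι) :
    ∃ T ⊆ S, Set.InjOn c T ∧ T.image c = S.image c := by
  obtain ⟨T, hTS, hinj, himage⟩ := exists_subset_injOn_image_eq_of_surjOn (S : Set κ) (S.image c)
    (by rw [coe_image]; exact Set.surjOn_image c S)
  exact ⟨T, mod_cast hTS, hinj, himage⟩

theorem card_sub_card_image_le [DecidableEq ι] (S : Finset κ) (c : κ → ι) :
    (#S : ℝ) - #(S.image c) ≤ #{q ∈ S.offDiag | c q.1 = c q.2} := by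
  obtain ⟨T, hTS, hinj, himage⟩ := exists_subset_injOn_image_eq S c
  have hsub : S \ T ⊆ {q ∈ S.offDiag | c q.1 = c q.2}.image Prod.fst := fun i hi => by
    obtain ⟨hiS, hiT⟩ := mem_sdiff.1 hi
    obtain ⟨j, hjT, hji⟩ := mem_image.1 (himage ▸ mem_image_of_mem c hiS)
    have hij : i ≠ j := fun h => hiT (h ▸ hjT)
    exact mem_image.2 ⟨(i, j), by simp [hiS, hTS hjT, hij, hji], rfl⟩
  rw [← himage, card_image_of_injOn hinj, ← cast_card_sdiff hTS]
  exact_mod_cast (card_le_card hsub).trans card_image_le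

variable [Fintype ι] [Fintype κ] [DecidableEq κ]

theorem expect_eq_expect_update (i : κ) (G : (κ → ι) → ℝ) :
    𝔼 c, G c = 𝔼 c, 𝔼 a, G (Function.update c i a) := by
  have swap_involutive : Function.Involutive
      fun x : (κ → ι) × ι => (Function.update x.1 i x.2, x.1 i) := fun x => by simp
  have hG (c : κ → ι) : 𝔼 _ : ι, G c = G c :=
    have : Nonempty ι := ⟨c i⟩
    Fintype.expect_const _
  calc 𝔼 c, G c = 𝔼 x : (κ → ι) × ι, G x.1 := by
        simp only [← univ_product_univ, expect_product, hG]
    _ = 𝔼 x : (κ → ι) × ι, G (Function.update x.1 i x.2) :=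
        Fintype.expect_equiv swap_involutive.toPerm _ _ fun x => by
          simp [Function.Involutive.toPerm]
    _ = 𝔼 c, 𝔼 a, G (Function.update c i a) := by
        simp only [← univ_product_univ, expect_product]

variable [DecidableEq ι]

theorem expect_ite_apply_eq_le {i j : κ} (hij : i ≠ j) :
    𝔼 c : κ → ι, (if c i = c j then 1 else 0 : ℝ) ≤ 1 / Fintype.card ι := by
  rw [expect_eq_expect_update i]
  rcases isEmpty_or_nonempty ι
  · simp
  · simp [Function.update_of_ne hij.symm]

theorem expect_card_sub_card_image_le (S : Finset κ) :
    𝔼 c : κ → ι, ((#S : ℝ) - #(S.image c)) ≤ (Fintype.card κ : ℝ) ^ 2 / Fintype.card ι := by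
  calc 𝔼 c : κ → ι, ((#S : ℝ) - #(S.image c))
      ≤ 𝔼 c : κ → ι, ∑ q ∈ S.offDiag, (if c q.1 = c q.2 then 1 else 0 : ℝ) :=
        expect_le_expect fun c _ => (card_sub_card_image_le S c).trans_eq (by simp)
    _ = ∑ q ∈ S.offDiag, 𝔼 c : κ → ι, (if c q.1 = c q.2 then 1 else 0 : ℝ) :=
        expect_sum_comm _ _ _
    _ ≤ ∑ q ∈ S.offDiag, (1 / Fintype.card ι : ℝ) :=
        sum_le_sum fun q hq => expect_ite_apply_eq_le (mem_offDiag.1 hq).2.2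
    _ ≤ (Fintype.card κ : ℝ) ^ 2 / Fintype.card ι := by
        have hcard : #S.offDiag ≤ Fintype.card κ ^ 2 :=
          (card_le_univ _).trans_eq (by rw [Fintype.card_prod, sq])
        rw [sum_const, nsmul_eq_mul, mul_one_div]
        gcongr
        exact_mod_cast hcard

end RandomMap

/-! ### Comparing random subsets of nearly equal size -/

section PermAverage

variable {ι κ : Type*}

/-- A function of finite sets that changes by at most one when a point is added. -/
def CardLipschitz (F : Finset ι → ℝ) : Prop :=
  ∀ ⦃A A' : Finset ι⦄, A ⊆ A' → |F A' - F A| ≤ #A' - #A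

theorem CardLipschitz.of_monotone [DecidableEq ι] {F : Finset ι → ℕ}
    (hmono : Monotone F) (hadd : ∀ A A', F A' ≤ F A + #(A' \ A)) :
    CardLipschitz fun A => (F A : ℝ) := fun A A' hA => by
  have hle : (F A : ℝ) ≤ F A' := mod_cast hmono hA
  beta_reduce
  rw [abs_of_nonneg (sub_nonneg.2 hle), ← cast_card_sdiff hA,
    sub_le_iff_le_add']
  exact_mod_cast hadd A A'

theorem cardLipschitz_bernoulliExpect [Fintype κ] {α : ℝ} (h₀ : 0 ≤ α) (h₁ : α ≤ 1)
    {F : Finset ι → Finset κ → ℝ} (hF : ∀ B, CardLipschitz fun A => F A B) :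
    CardLipschitz fun A => bernoulliExpect α (F A) := fun A A' hA => by
  rw [← bernoulliExpect_sub, ← bernoulliExpect_const (ι := κ) α ((#A' : ℝ) - #A)]
  exact (abs_bernoulliExpect_le h₀ h₁ _).trans (bernoulliExpect_mono h₀ h₁ fun B => hF B hA)

theorem exists_perm_map_eq [Finite ι] {A B : Finset ι} (h : #A = #B) :
    ∃ σ : Equiv.Perm ι, A.map σ.toEmbedding = B := by
  cases nonempty_fintype ι
  let e : A ≃ B := Fintype.equivOfCardEq (by simpa using h)
  refine ⟨e.extendSubtype, eq_of_subset_of_card_le (fun x hx => ?_) (by simp [h])⟩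
  obtain ⟨a, ha, rfl⟩ := mem_map.1 hx
  exact e.extendSubtype_mem a ha

variable [Fintype ι] [DecidableEq ι]

/-- The average of `F` over the images of `A` under all permutations of the ambient type, that is,
the mean of `F` over the sets of cardinality `#A`. -/
def permAvg (F : Finset ι → ℝ) (A : Finset ι) : ℝ :=
  𝔼 σ : Equiv.Perm ι, F (A.map σ.toEmbedding)

theorem permAvg_map (F : Finset ι → ℝ) (A : Finset ι) (τ : Equiv.Perm ι) :
    permAvg F (A.map τ.toEmbedding) = permAvg F A :=
  Fintype.expect_equiv (Equiv.mulRight τ) _ _ fun σ => by rw [Finset.map_map]; rfl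

theorem CardLipschitz.abs_permAvg_sub_le {F : Finset ι → ℝ} (hF : CardLipschitz F)
    (A B : Finset ι) : |permAvg F A - permAvg F B| ≤ |(#A : ℝ) - #B| := by
  wlog hAB : #B ≤ #A generalizing A B
  · rw [abs_sub_comm, abs_sub_comm (#A : ℝ)]
    exact this B A (not_le.1 hAB).le
  obtain ⟨B', hB'A, hcard⟩ := exists_subset_card_eq hAB
  obtain ⟨τ, rfl⟩ := exists_perm_map_eq hcard.symm
  rw [← permAvg_map F B τ, permAvg, permAvg, ← expect_sub_distrib]
  refine (abs_expect_le _ _).trans (expect_le univ_nonempty fun σ _ => ?_)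
  refine (hF (map_subset_map.2 hB'A)).trans (le_of_eq_of_le ?_ (le_abs_self _))
  simp only [card_map]

theorem bernoulliExpect_permAvg (α : ℝ) (F : Finset ι → ℝ) :
    bernoulliExpect α (permAvg F) = bernoulliExpect α F := by
  unfold permAvg
  rw [bernoulliExpect_expect]
  simp only [bernoulliExpect_map_perm, Fintype.expect_const]

theorem CardLipschitz.abs_bernoulliExpect_sub_permAvg_le {F : Finset ι → ℝ}
    (hF : CardLipschitz F) {α : ℝ} (h₀ : 0 ≤ α) (h₁ : α ≤ 1) (A₀ : Finset ι) :
    |bernoulliExpect α F - permAvg F A₀| ≤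
      √(Fintype.card ι * α) + |Fintype.card ι * α - #A₀| := by
  calc |bernoulliExpect α F - permAvg F A₀|
      = |bernoulliExpect α fun A => permAvg F A - permAvg F A₀| := by
        rw [bernoulliExpect_sub, bernoulliExpect_const, bernoulliExpect_permAvg]
    _ ≤ bernoulliExpect α fun A : Finset ι => |(#A : ℝ) - #A₀| :=
        (abs_bernoulliExpect_le h₀ h₁ _).trans
          (bernoulliExpect_mono h₀ h₁ fun A => hF.abs_permAvg_sub_le A A₀)
    _ ≤ _ := bernoulliExpect_abs_card_sub_le h₀ h₁ _

variable [Fintype κ] [DecidableEq κ]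

theorem expect_permAvg_image (F : Finset ι → ℝ) (S : Finset κ) :
    𝔼 c : κ → ι, permAvg F (S.image c) = 𝔼 c : κ → ι, F (S.image c) := by
  have invariant (σ : Equiv.Perm ι) :
      𝔼 c : κ → ι, F ((S.image c).map σ.toEmbedding) = 𝔼 c : κ → ι, F (S.image c) :=
    Fintype.expect_equiv (Equiv.arrowCongr (Equiv.refl κ) σ) _ _ fun c => by
      rw [map_eq_image, image_image]; rfl
  unfold permAvg
  rw [expect_comm]
  simp only [invariant, Fintype.expect_const]

theorem CardLipschitz.abs_expect_image_sub_permAvg_le [Nonempty ι] {F : Finset ι → ℝ}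
    (hF : CardLipschitz F) {S : Finset κ} {A₀ : Finset ι} (hA₀ : #A₀ = #S) :
    |𝔼 c : κ → ι, F (S.image c) - permAvg F A₀| ≤
      (Fintype.card κ : ℝ) ^ 2 / Fintype.card ι := by
  rw [← expect_permAvg_image, ← Fintype.expect_const (ι := κ → ι) (permAvg F A₀),
    ← expect_sub_distrib]
  refine (abs_expect_le _ _).trans (le_trans (expect_le_expect fun c _ => ?_)
    (expect_card_sub_card_image_le S))
  refine (hF.abs_permAvg_sub_le _ _).trans_eq ?_
  rw [hA₀, abs_sub_comm, abs_of_nonneg (sub_nonneg.2 (mod_cast card_image_le))]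

theorem CardLipschitz.abs_expect_image_sub_bernoulliExpect_le [Nonempty ι] {F : Finset ι → ℝ}
    (hF : CardLipschitz F) {α : ℝ} (h₀ : 0 ≤ α) (h₁ : α ≤ 1) {S : Finset κ}
    (hS : #S ≤ Fintype.card ι) :
    |𝔼 c : κ → ι, F (S.image c) - bernoulliExpect α F| ≤
      (Fintype.card κ : ℝ) ^ 2 / Fintype.card ι +
        (√(Fintype.card ι * α) + |Fintype.card ι * α - #S|) := by
  obtain ⟨A₀, -, hA₀⟩ := exists_subset_card_eq (card_univ (α := ι) ▸ hS)
  rw [← hA₀]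
  refine (abs_sub_le _ (permAvg F A₀) _).trans (add_le_add ?_ ?_)
  · exact hF.abs_expect_image_sub_permAvg_le hA₀
  · rw [abs_sub_comm]
    exact hF.abs_bernoulliExpect_sub_permAvg_le h₀ h₁ A₀

end PermAverage

/-! ### Matchings of cells on a line -/

section Lattice

variable {K w : ℕ}

/-- Two cells are compatible when their indices differ by at most `w`. Both bounds are written
additively because subtraction truncates in `ℕ`. -/
def CellsNear (w i j : ℕ) : Prop :=
  i ≤ j + w ∧ j ≤ i + w

/-- The maximum number of compatible pairs between the occupied supply cells `A` and the occupied
demand cells `B`. -/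
def latticeMatching (w : ℕ) (A B : Finset (Fin K)) : ℕ :=
  matchingNumber fun i j : Fin K => i ∈ A ∧ j ∈ B ∧ CellsNear w i j

/-- The cells of `A` with index at least `x`. -/
def tail (x : ℕ) (A : Finset (Fin K)) : Finset (Fin K) :=
  {i ∈ A | x ≤ (i : ℕ)}

theorem mem_tail {x : ℕ} {A : Finset (Fin K)} {i : Fin K} : i ∈ tail x A ↔ i ∈ A ∧ x ≤ (i : ℕ) :=
  mem_filter

theorem tail_zero (A : Finset (Fin K)) : tail 0 A = A := by
  ext; simp [mem_tail]

theorem tail_of_le {x : ℕ} (hx : K ≤ x) (A : Finset (Fin K)) : tail x A = ∅ :=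
  filter_eq_empty_iff.2 fun i _ => (i.2.trans_le hx).not_ge

theorem tail_insert (x : Fin K) (A : Finset (Fin K)) :
    tail x (insert x A) = insert x (tail (x + 1) A) := by
  ext i
  simp only [mem_tail, mem_insert, Fin.ext_iff]
  grind

theorem tail_erase (x : Fin K) (A : Finset (Fin K)) : tail x (A.erase x) = tail (x + 1) A := by
  ext i
  simp only [mem_tail, mem_erase, ne_eq, Fin.ext_iff]
  grind

theorem latticeMatching_congr {A B A' B' : Finset (Fin K)}
    (h : ∀ i j : Fin K, CellsNear w i j → (i ∈ A ∧ j ∈ B ↔ i ∈ A' ∧ j ∈ B')) :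
    latticeMatching w A B = latticeMatching w A' B' := by
  unfold latticeMatching
  congr! 3 with i j
  grind

theorem latticeMatching_empty_left (B : Finset (Fin K)) : latticeMatching w ∅ B = 0 :=
  Nat.le_zero.1 <| matchingNumber_le fun _ hM =>
    (card_eq_zero.2 (eq_empty_of_forall_notMem fun e he => notMem_empty _ (hM.1 e he).1)).le

theorem latticeMatching_empty_right (A : Finset (Fin K)) : latticeMatching w A ∅ = 0 :=
  Nat.le_zero.1 <| matchingNumber_le fun _ hM =>
    (card_eq_zero.2 (eq_empty_of_forall_notMem fun e he => notMem_empty _ (hM.1 e he).2.1)).le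

/-- Matching the two first cells loses nothing: any other partners they have are compatible with
each other. -/
theorem latticeMatching_insert_insert {x y : Fin K} (hxy : CellsNear w x y)
    (A B : Finset (Fin K)) :
    latticeMatching w (insert x (tail (x + 1) A)) (insert y (tail (y + 1) B)) =
      latticeMatching w (tail (x + 1) A) (tail (y + 1) B) + 1 := by
  unfold latticeMatching
  rw [matchingNumber_eq_add_one (i₀ := x) (j₀ := y)]
  · congr! 4 with i j
    simp only [mem_insert, mem_tail, ne_eq, Fin.ext_iff]
    grind
  · exact ⟨mem_insert_self _ _, mem_insert_self _ _, hxy⟩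
  · simp only [CellsNear, mem_insert, mem_tail, Fin.ext_iff] at hxy ⊢
    rintro i j ⟨-, hj, hxj⟩ ⟨hi, -, hiy⟩
    refine ⟨hi, hj, ?_⟩
    omega

theorem latticeMatching_tail_left_of_lt {x y : ℕ} (h : x + w < y) (A B : Finset (Fin K)) :
    latticeMatching w (tail x A) (tail y B) = latticeMatching w (tail (x + 1) A) (tail y B) :=
  latticeMatching_congr fun i j hij => by
    simp only [mem_tail, CellsNear] at hij ⊢
    grind

theorem latticeMatching_insert_right_of_lt {x : ℕ} {y : Fin K} (h : y + w < x)
    (A B : Finset (Fin K)) :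
    latticeMatching w (tail x A) (insert y B) = latticeMatching w (tail x A) B :=
  latticeMatching_congr fun i j hij => by
    simp only [mem_tail, mem_insert, CellsNear, Fin.ext_iff] at hij ⊢
    grind

theorem cardLipschitz_latticeMatching_left (w : ℕ) (B : Finset (Fin K)) :
    CardLipschitz fun A => (latticeMatching w A B : ℝ) :=
  .of_monotone (fun _ _ hA => matchingNumber_mono fun _ _ h => ⟨hA h.1, h.2⟩) fun A A' => by
    refine (matchingNumber_le_add_verts (adj' := fun i j => i ∈ A ∧ j ∈ B ∧ CellsNear w i j)
      (A' \ A) ∅ fun i j h => ?_).trans_eq (by rw [card_empty, add_zero]; rfl)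
    grind

theorem cardLipschitz_latticeMatching_right (w : ℕ) (A : Finset (Fin K)) :
    CardLipschitz fun B => (latticeMatching w A B : ℝ) :=
  .of_monotone (fun _ _ hB => matchingNumber_mono fun _ _ h => ⟨h.1, hB h.2.1, h.2.2⟩)
    fun B B' => by
      refine (matchingNumber_le_add_verts (adj' := fun i j => i ∈ A ∧ j ∈ B ∧ CellsNear w i j)
        ∅ (B' \ B) fun i j h => ?_).trans_eq (by rw [card_empty, add_zero]; rfl)
      grind

end Lattice

/-! ### The greedy recursion on the band `|x - y| ≤ w` -/

section Band

variable {K w : ℕ} {α β : ℝ}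

/-- The greedy sweep of a line of `K` cells from left to right, seen from supply cell `x` and demand
cell `y`: `U x y` is a value for the cells from `x` and `y` on, and `H x y` is the same value given
that the demand cell `y` is occupied. Supply and demand cells are occupied with probability `α` and
`β`, and the two cells of an occupied compatible pair are matched with each other. -/
structure IsBandRecursion (w : ℕ) (α β : ℝ) (U : ℕ → ℕ → ℝ) (H : ℕ → Fin K → ℝ) : Prop where
  demand (x : ℕ) (y : Fin K) : CellsNear w x y → U x y = β * H x y + (1 - β) * U x (y + 1)
  supply (x y : Fin K) : CellsNear w x y →
    H x y = α * (1 + U (x + 1) (y + 1)) + (1 - α) * H (x + 1) y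
  skip_supply (x y : ℕ) : x + w + 1 = y → U x y = U (x + 1) y
  skip_demand (x : ℕ) (y : Fin K) : y + w + 1 = x → H x y = U x (y + 1)

/-- The expected matching number of the supply cells from `x` on and the demand cells from `y` on,
when cells are occupied independently with probabilities `α` and `β`. -/
def bandValue (K w : ℕ) (α β : ℝ) (x y : ℕ) : ℝ :=
  bernoulliExpect α fun A : Finset (Fin K) => bernoulliExpect β fun B : Finset (Fin K) =>
    (latticeMatching w (tail x A) (tail y B) : ℝ)

/-- The value `bandValue K w α β x y` given that the demand cell `y` is occupied. -/
def bandValueOccupied (K w : ℕ) (α β : ℝ) (x : ℕ) (y : Fin K) : ℝ :=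
  bernoulliExpect α fun A : Finset (Fin K) => bernoulliExpect β fun B : Finset (Fin K) =>
    (latticeMatching w (tail x A) (insert y (tail (y + 1) B)) : ℝ)

theorem bandValue_of_le_right {x y : ℕ} (hy : K ≤ y) : bandValue K w α β x y = 0 := by
  simp [bandValue, tail_of_le hy, latticeMatching_empty_right, bernoulliExpect_const]

theorem bandValueOccupied_of_le_left {x : ℕ} (hx : K ≤ x) (y : Fin K) :
    bandValueOccupied K w α β x y = 0 := by
  simp [bandValueOccupied, tail_of_le hx, latticeMatching_empty_left, bernoulliExpect_const]

theorem bandValue_demand (x : ℕ) (y : Fin K) :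
    bandValue K w α β x y =
      β * bandValueOccupied K w α β x y + (1 - β) * bandValue K w α β x (y + 1) := by
  simp only [bandValue, bandValueOccupied, ← bernoulliExpect_const_mul, ← bernoulliExpect_add]
  congr! 2 with A
  rw [bernoulliExpect_eq_insert_add_erase β y]
  simp only [tail_insert, tail_erase, bernoulliExpect_add, bernoulliExpect_const_mul]

theorem bandValueOccupied_supply {x y : Fin K} (hxy : CellsNear w x y) :
    bandValueOccupied K w α β x y = α * (1 + bandValue K w α β (x + 1) (y + 1)) +
      (1 - α) * bandValueOccupied K w α β (x + 1) y := by
  rw [bandValueOccupied, bernoulliExpect_eq_insert_add_erase α x]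
  simp only [tail_insert, tail_erase, latticeMatching_insert_insert hxy, Nat.cast_add, Nat.cast_one,
    bernoulliExpect_add, bernoulliExpect_const]
  rw [add_comm (1 : ℝ)]
  rfl

theorem isBandRecursion_bandValue (K w : ℕ) (α β : ℝ) :
    IsBandRecursion w α β (bandValue K w α β) (bandValueOccupied K w α β) where
  demand x y _ := bandValue_demand x y
  supply _ _ := bandValueOccupied_supply
  skip_supply x y hxy := by
    simp only [bandValue, latticeMatching_tail_left_of_lt (show x + w < y by omega)]
  skip_demand x y hxy := by
    simp only [bandValue, bandValueOccupied,
      latticeMatching_insert_right_of_lt (show y + w < x by omega)]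

theorem abs_convexCombination_le {a s t C : ℝ} (h₀ : 0 ≤ a) (h₁ : a ≤ 1) (hs : |s| ≤ C)
    (ht : |t| ≤ C) : |a * s + (1 - a) * t| ≤ C :=
  abs_le.2 <| convex_Icc (-C) C (abs_le.1 hs) (abs_le.1 ht) h₀ (sub_nonneg.2 h₁) (by ring)

/-- A maximum principle: the recursion expresses the difference of two solutions as an average of
differences nearer to the boundary. -/
theorem IsBandRecursion.abs_sub_le {U U' : ℕ → ℕ → ℝ} {H H' : ℕ → Fin K → ℝ} {C : ℝ}
    (hα₀ : 0 ≤ α) (hα₁ : α ≤ 1) (hβ₀ : 0 ≤ β) (hβ₁ : β ≤ 1)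
    (hU : IsBandRecursion w α β U H) (hU' : IsBandRecursion w α β U' H')
    (demand_end : ∀ x ≤ K, K ≤ x + w + 1 → |U x K - U' x K| ≤ C)
    (supply_end : ∀ y : Fin K, K ≤ y + w + 1 → |H K y - H' K y| ≤ C)
    {x y : ℕ} (hx : x ≤ K) (hy : y ≤ K) :
    (∀ hyK : y < K, x ≤ y + w + 1 → y ≤ x + w → |H x ⟨y, hyK⟩ - H' x ⟨y, hyK⟩| ≤ C) ∧
      (x ≤ y + w → y ≤ x + w + 1 → |U x y - U' x y| ≤ C) := by
  induction hN : (K - x) + (K - y) using Nat.strong_induction_on generalizing x y with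
  | _ N ih =>
  have hH : ∀ hyK : y < K, x ≤ y + w + 1 → y ≤ x + w → |H x ⟨y, hyK⟩ - H' x ⟨y, hyK⟩| ≤ C := by
    intro hyK hxy hyx
    rcases hx.eq_or_lt with rfl | hxK
    · exact supply_end _ hxy
    rcases hxy.eq_or_lt with hskip | hnear
    · rw [hU.skip_demand _ _ hskip.symm, hU'.skip_demand _ _ hskip.symm]
      exact (ih _ (by omega) hx hyK rfl).2 (by omega) (by omega)
    · have matched := (ih _ (by omega) hxK hyK rfl).2 (by omega) (by omega)
      have unmatched := (ih _ (by omega) hxK hy rfl).1 hyK (by omega) (by omega)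
      have near : CellsNear w x y := ⟨by omega, hyx⟩
      rw [hU.supply ⟨x, hxK⟩ ⟨y, hyK⟩ near, hU'.supply ⟨x, hxK⟩ ⟨y, hyK⟩ near]
      convert abs_convexCombination_le hα₀ hα₁ matched unmatched using 2
      ring
  refine ⟨hH, fun hxy hyx => ?_⟩
  rcases hy.eq_or_lt with rfl | hyK
  · exact demand_end _ hx hyx
  rcases hyx.eq_or_lt with hskip | hnear
  · rw [hU.skip_supply _ _ hskip.symm, hU'.skip_supply _ _ hskip.symm]
    exact (ih _ (by omega) (by omega) hy rfl).2 (by omega) (by omega)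
  · have occupied := hH hyK (by omega) (by omega)
    have vacant := (ih _ (by omega) hx hyK rfl).2 (by omega) (by omega)
    have near : CellsNear w x y := ⟨hxy, by omega⟩
    rw [hU.demand x ⟨y, hyK⟩ near, hU'.demand x ⟨y, hyK⟩ near]
    convert abs_convexCombination_le hβ₀ hβ₁ occupied vacant using 2
    ring

/-- A stationary solution of the greedy recursion: each demand cell contributes a gain `l`, and the
biases `v` and `h` depend only on the offset `z = x - y` of the two cells. -/
structure IsGainBias (w : ℕ) (α β l : ℝ) (v h : ℤ → ℝ) : Prop where
  demand (z : ℤ) : -w ≤ z → z ≤ w → v z = β * h z + (1 - β) * (v (z - 1) - l)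
  supply (z : ℤ) : -w ≤ z → z ≤ w → h z = α * (1 + (v z - l)) + (1 - α) * h (z + 1)
  skip_supply : v (-w - 1) = v (-w)
  skip_demand : h (w + 1) = v w - l

theorem IsGainBias.isBandRecursion {l : ℝ} {v h : ℤ → ℝ} (hvh : IsGainBias w α β l v h) :
    IsBandRecursion (K := K) w α β (fun x y => l * (K - y) + v (x - y))
      (fun x y => l * (K - y) + h (x - y)) where
  demand x y hxy := by
    have hz := hvh.demand (x - y) (by have := hxy.2; omega) (by have := hxy.1; omega)
    push_cast
    rw [hz, sub_add_eq_sub_sub (x : ℤ)]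
    ring
  supply x y hxy := by
    have hz := hvh.supply (x - y) (by have := hxy.2; omega) (by have := hxy.1; omega)
    push_cast
    rw [hz, add_sub_add_right_eq_sub, sub_add_eq_add_sub]
    ring
  skip_supply x y hxy := by
    have hz : (x : ℤ) - y = -w - 1 := by omega
    have hz' : ((x + 1 : ℕ) : ℤ) - y = -w := by omega
    rw [hz, hz', hvh.skip_supply]
  skip_demand x y hxy := by
    have hz : (x : ℤ) - (y : ℕ) = w + 1 := by omega
    have hz' : (x : ℤ) - ((y + 1 : ℕ) : ℤ) = w := by omega
    rw [hz, hz', hvh.skip_demand]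
    push_cast
    ring

/-- An affine plus geometric ansatz solves the gain-bias equations as soon as three linear
relations between its coefficients hold. -/
theorem isGainBias_of_coeffs {l c m e ρ : ℝ} (hβ : β ≠ 0) (hρ₀ : ρ ≠ 0)
    (hρ : ρ * (1 - α) = 1 - β) (hm : m * (1 - ρ) = 1)
    (demand_coeff : l = β * e - (1 - β) * c) (supply_coeff : α * e = α + (1 - α) * c)
    (skip_coeff : β * (c + e) = c * ρ ^ (2 * w + 1)) :
    IsGainBias w α β l (fun z => l + c * (z + m * ρ ^ (z + w + 1)))
      (fun z => e + c * (z + α / β * m * ρ ^ (z + w + 1))) where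
  demand z _ _ := by
    rw [show z + w + 1 = (z - 1 + w + 1) + 1 by ring, zpow_add_one₀ hρ₀]
    generalize ρ ^ (z - 1 + w + 1) = X
    push_cast
    field_simp
    linear_combination demand_coeff + c * m * X * hρ
  supply z _ _ := by
    rw [show z + 1 + w + 1 = (z + w + 1) + 1 by ring, zpow_add_one₀ hρ₀ (z + w + 1)]
    generalize ρ ^ (z + w + 1) = X
    push_cast
    field_simp
    linear_combination β * supply_coeff - α * c * m * X * hρ
  skip_supply := by
    rw [show -(w : ℤ) - 1 + w + 1 = 0 by ring, show -(w : ℤ) + w + 1 = 1 by ring, zpow_zero,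
      zpow_one]
    push_cast
    linear_combination c * hm
  skip_demand := by
    rw [show (w : ℤ) + 1 + w + 1 = ((2 * w + 1 : ℕ) : ℤ) + 1 by push_cast; ring,
      show (w : ℤ) + w + 1 = ((2 * w + 1 : ℕ) : ℤ) by push_cast; ring, zpow_add_one₀ hρ₀,
      zpow_natCast]
    generalize ρ ^ (2 * w + 1) = R at *
    push_cast
    field_simp
    linear_combination skip_coeff - c * R * m * hρ - c * R * hm

end Band

/-! ### The gain per cell -/

section Gain

variable {w : ℕ} {α β : ℝ}

/-- The ratio of the geometric part of the stationary solution across the whole band of offsets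
`-w, …, w`. -/
def bandRatio (w : ℕ) (α β : ℝ) : ℝ :=
  ((1 - β) / (1 - α)) ^ (2 * w + 1)

/-- The expected number of matched pairs per cell in the stationary regime. -/
def latticeGain (w : ℕ) (α β : ℝ) : ℝ :=
  α * β * (1 - bandRatio w α β) / (β - α * bandRatio w α β)

theorem bandRatio_le_one (hαβ : α ≤ β) (hβ : β ≤ 1) : bandRatio w α β ≤ 1 :=
  pow_le_one₀ (div_nonneg (by linarith) (by linarith))
    (div_le_one_of_le₀ (by linarith) (by linarith))

theorem sub_le_sub_mul_bandRatio (hα : 0 ≤ α) (hαβ : α ≤ β) (hβ : β ≤ 1) :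
    β - α ≤ β - α * bandRatio w α β :=
  sub_le_sub_left (mul_le_of_le_one_right hα (bandRatio_le_one hαβ hβ)) β

theorem latticeGain_nonneg (hα : 0 ≤ α) (hαβ : α < β) (hβ : β ≤ 1) : 0 ≤ latticeGain w α β := by
  have hD := sub_le_sub_mul_bandRatio (w := w) hα hαβ.le hβ
  have hR := sub_nonneg.2 (bandRatio_le_one (w := w) hαβ.le hβ)
  exact div_nonneg (mul_nonneg (mul_nonneg hα (by linarith)) hR) (by linarith)

theorem latticeGain_le (hα : 0 ≤ α) (hαβ : α < β) (hβ : β ≤ 1) : latticeGain w α β ≤ β := by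
  have hD := sub_le_sub_mul_bandRatio (w := w) hα hαβ.le hβ
  rw [latticeGain, div_le_iff₀ (by linarith)]
  nlinarith

theorem abs_affine_add_geometric_le {e c m ρ E : ℝ} {z : ℤ} (hρ₀ : 0 < ρ) (hρ₁ : ρ ≤ 1)
    (hE : |e| + |c * m| ≤ E) (hz₀ : -(w + 1) ≤ z) (hz₁ : z ≤ w + 1) :
    |e + c * (z + m * ρ ^ (z + w + 1))| ≤ E + |c| * (w + 1) := by
  have hz : |(z : ℝ)| ≤ w + 1 := mod_cast abs_le.2 ⟨hz₀, hz₁⟩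
  have hpow : ρ ^ (z + w + 1) ≤ 1 := by
    lift z + w + 1 to ℕ using by omega with k
    exact_mod_cast pow_le_one₀ hρ₀.le hρ₁
  calc |e + c * (z + m * ρ ^ (z + w + 1))|
      = |e + (c * z + c * m * ρ ^ (z + w + 1))| := by ring_nf
    _ ≤ |e| + (|c| * |(z : ℝ)| + |c * m| * ρ ^ (z + w + 1)) := by
        refine (abs_add_le _ _).trans (add_le_add_right ((abs_add_le _ _).trans_eq ?_) _)
        rw [abs_mul c, abs_mul (c * m), abs_of_pos (zpow_pos hρ₀ _)]
    _ ≤ |e| + (|c| * (w + 1) + |c * m| * 1) := by gcongr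
    _ ≤ E + |c| * (w + 1) := by linarith

/-- The common denominator of the coefficients of the stationary solution, inverted and scaled by
`β`. -/
def biasScale (w : ℕ) (α β : ℝ) : ℝ :=
  β / (β - α * bandRatio w α β)

/-- The bias of the stationary solution at offset `z`. -/
def freeBias (w : ℕ) (α β : ℝ) (z : ℤ) : ℝ :=
  latticeGain w α β + -(α * biasScale w α β) *
    (z + (1 - α) / (β - α) * ((1 - β) / (1 - α)) ^ (z + w + 1))

/-- The bias of the stationary solution at offset `z`, given that the demand cell is occupied. -/
def occupiedBias (w : ℕ) (α β : ℝ) (z : ℤ) : ℝ :=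
  1 - (1 - α) * biasScale w α β + -(α * biasScale w α β) *
    (z + α / β * ((1 - α) / (β - α)) * ((1 - β) / (1 - α)) ^ (z + w + 1))

theorem isGainBias_latticeGain (hα : 0 ≤ α) (hαβ : α < β) (hβ : β < 1) :
    IsGainBias w α β (latticeGain w α β) (freeBias w α β) (occupiedBias w α β) := by
  have hβ₀ : β ≠ 0 := (hα.trans_lt hαβ).ne'
  have hα₁ : 1 - α ≠ 0 := by linarith
  have hβ₁ : 1 - β ≠ 0 := by linarith
  have hβα : β - α ≠ 0 := by linarith
  have hD : β - α * bandRatio w α β ≠ 0 := by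
    linarith [sub_le_sub_mul_bandRatio (w := w) hα hαβ.le hβ.le]
  refine isGainBias_of_coeffs hβ₀ (div_ne_zero hβ₁ hα₁) ?_ ?_ ?_ ?_ ?_
  · field_simp
  · field_simp
    ring
  · rw [latticeGain, biasScale]
    field_simp
    ring
  · ring
  · rw [← bandRatio, biasScale]
    field_simp
    ring

theorem biasScale_nonneg (hα : 0 ≤ α) (hαβ : α < β) (hβ : β ≤ 1) : 0 ≤ biasScale w α β :=
  div_nonneg (by linarith) (by linarith [sub_le_sub_mul_bandRatio (w := w) hα hαβ.le hβ])

theorem biasScale_le (hα : 0 ≤ α) (hαβ : α < β) (hβ : β ≤ 1) : biasScale w α β ≤ β / (β - α) :=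
  div_le_div_of_nonneg_left (by linarith) (sub_pos.2 hαβ)
    (sub_le_sub_mul_bandRatio hα hαβ.le hβ)

theorem abs_biasSlope_le (hα : 0 ≤ α) (hαβ : α < β) (hβ : β ≤ 1) :
    |-(α * biasScale w α β)| ≤ β * (β / (β - α)) := by
  rw [abs_neg, abs_of_nonneg (mul_nonneg hα (biasScale_nonneg hα hαβ hβ))]
  exact mul_le_mul hαβ.le (biasScale_le hα hαβ hβ) (biasScale_nonneg hα hαβ hβ) (by linarith)

theorem abs_biasSlope_mul_le (hα : 0 ≤ α) (hαβ : α < β) (hβ : β ≤ 1) :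
    |-(α * biasScale w α β) * ((1 - α) / (β - α))| ≤ (β / (β - α)) ^ 2 := by
  have hβα : 0 < β - α := sub_pos.2 hαβ
  have hm : 0 ≤ (1 - α) / (β - α) := div_nonneg (by linarith) hβα.le
  calc |-(α * biasScale w α β) * ((1 - α) / (β - α))|
      ≤ β * (β / (β - α)) * ((1 - α) / (β - α)) := by
        rw [abs_mul, abs_of_nonneg hm]
        exact mul_le_mul_of_nonneg_right (abs_biasSlope_le hα hαβ hβ) hm
    _ = (β / (β - α)) ^ 2 * (1 - α) := by ring
    _ ≤ (β / (β - α)) ^ 2 := mul_le_of_le_one_right (sq_nonneg _) (by linarith)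

theorem abs_one_sub_biasScale_le (hα : 0 ≤ α) (hαβ : α < β) (hβ : β ≤ 1) :
    |1 - (1 - α) * biasScale w α β| ≤ β / (β - α) := by
  have hκ : 1 ≤ β / (β - α) := (one_le_div (sub_pos.2 hαβ)).2 (by linarith)
  have ht₀ := biasScale_nonneg (w := w) hα hαβ hβ
  have ht := biasScale_le (w := w) hα hαβ hβ
  rw [abs_le]
  constructor <;> nlinarith

theorem abs_freeBias_le {z : ℤ} (hα : 0 ≤ α) (hαβ : α < β) (hβ : β < 1) (hz₀ : -(w + 1) ≤ z)
    (hz₁ : z ≤ w + 1) :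
    |freeBias w α β z| ≤
      latticeGain w α β + (β / (β - α)) ^ 2 + β * (β / (β - α)) * (w + 1) := by
  have hρ₁ : (1 - β) / (1 - α) ≤ 1 := (div_le_one (by linarith)).2 (by linarith)
  refine (abs_affine_add_geometric_le (div_pos (by linarith) (by linarith)) hρ₁ (add_le_add
    (abs_of_nonneg (latticeGain_nonneg hα hαβ hβ.le)).le (abs_biasSlope_mul_le hα hαβ hβ.le))
    hz₀ hz₁).trans ?_
  gcongr
  exact abs_biasSlope_le hα hαβ hβ.le

theorem abs_occupiedBias_le {z : ℤ} (hα : 0 ≤ α) (hαβ : α < β) (hβ : β < 1) (hz₀ : -(w + 1) ≤ z)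
    (hz₁ : z ≤ w + 1) :
    |occupiedBias w α β z| ≤
      β / (β - α) + (β / (β - α)) ^ 2 + β * (β / (β - α)) * (w + 1) := by
  have hρ₁ : (1 - β) / (1 - α) ≤ 1 := (div_le_one (by linarith)).2 (by linarith)
  have hαβ₁ : α / β ≤ 1 := (div_le_one (by linarith)).2 hαβ.le
  have hm : |-(α * biasScale w α β) * (α / β * ((1 - α) / (β - α)))| ≤ (β / (β - α)) ^ 2 := by
    rw [mul_left_comm, abs_mul, abs_of_nonneg (div_nonneg hα (by linarith))]
    exact (mul_le_of_le_one_left (abs_nonneg _) hαβ₁).trans (abs_biasSlope_mul_le hα hαβ hβ.le)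
  refine (abs_affine_add_geometric_le (div_pos (by linarith) (by linarith)) hρ₁
    (add_le_add (abs_one_sub_biasScale_le hα hαβ hβ.le) hm) hz₀ hz₁).trans ?_
  gcongr
  exact abs_biasSlope_le hα hαβ hβ.le

theorem abs_bandValue_sub_profile_le (K : ℕ) (hα : 0 ≤ α) (hαβ : α < β) (hβ : β < 1) :
    |bandValue K w α β 0 0 - (latticeGain w α β * K + freeBias w α β 0)| ≤
      latticeGain w α β * (w + 1) +
        (β / (β - α) + (β / (β - α)) ^ 2 + β * (β / (β - α)) * (w + 1)) := by
  have hl := latticeGain_nonneg (w := w) hα hαβ hβ.le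
  have hκ : 0 ≤ β / (β - α) := div_nonneg (by linarith) (by linarith)
  have hmax := (IsBandRecursion.abs_sub_le (K := K)
    (C := latticeGain w α β * (w + 1) +
      (β / (β - α) + (β / (β - α)) ^ 2 + β * (β / (β - α)) * (w + 1)))
    hα (by linarith) (by linarith) hβ.le
    (isBandRecursion_bandValue K w α β) (isGainBias_latticeGain hα hαβ hβ).isBandRecursion
    (fun x hx hxw => ?_) (fun y hyw => ?_) (Nat.zero_le K) (Nat.zero_le K)).2
    (Nat.zero_le _) (Nat.zero_le _)
  · simpa using hmax
  · have hv := abs_freeBias_le (w := w) (z := x - K) hα hαβ hβ (by omega) (by omega)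
    rw [bandValue_of_le_right le_rfl, sub_self, mul_zero, zero_add, zero_sub, abs_neg]
    nlinarith [mul_nonneg hl w.cast_nonneg]
  · have hh := abs_occupiedBias_le (w := w) (z := K - (y : ℕ)) hα hαβ hβ (by omega) (by omega)
    have hKy : (K : ℝ) ≤ y + w + 1 := mod_cast hyw
    have hKy₀ : (y : ℝ) ≤ K := mod_cast y.2.le
    rw [bandValueOccupied_of_le_left le_rfl, zero_sub, abs_neg]
    refine (abs_add_le _ _).trans (add_le_add ?_ hh)
    rw [abs_of_nonneg (mul_nonneg hl (sub_nonneg.2 hKy₀))]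
    exact mul_le_mul_of_nonneg_left (by linarith) hl

theorem abs_bandValue_sub_latticeGain_mul_le (K : ℕ) (hα : 0 ≤ α) (hαβ : α < β) (hβ : β < 1) :
    |bandValue K w α β 0 0 - latticeGain w α β * K| ≤
      4 * (1 + β * (w + 1)) * (β / (β - α)) ^ 2 := by
  have hprofile := abs_bandValue_sub_profile_le (w := w) K hα hαβ hβ
  have hbias := abs_freeBias_le (w := w) (z := 0) hα hαβ hβ (by omega) (by omega)
  have hl := latticeGain_le (w := w) hα hαβ hβ.le
  have hκ : 1 ≤ β / (β - α) := (one_le_div (sub_pos.2 hαβ)).2 (by linarith)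
  have hgain : latticeGain w α β * (w + 1) ≤ β * (w + 1) := by gcongr
  have hgain₁ : latticeGain w α β ≤ β * (w + 1) := by nlinarith [w.cast_nonneg (α := ℝ)]
  calc |bandValue K w α β 0 0 - latticeGain w α β * K|
      ≤ |bandValue K w α β 0 0 - (latticeGain w α β * K + freeBias w α β 0)| +
          |freeBias w α β 0| := by
        refine (abs_add_le _ _).trans_eq' ?_
        ring_nf
    _ ≤ 2 * (β * (w + 1)) + β / (β - α) + 2 * (β / (β - α)) ^ 2 +
          2 * (β * (w + 1)) * (β / (β - α)) := by linarith
    _ ≤ 4 * (1 + β * (w + 1)) * (β / (β - α)) ^ 2 := by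
        have hβw : 0 ≤ β * (w + 1) := mul_nonneg (by linarith) (by positivity)
        have hκ₂ : β / (β - α) ≤ (β / (β - α)) ^ 2 := le_self_pow₀ hκ two_ne_zero
        nlinarith

end Gain

/-! ### Nodes placed in random cells -/

section CellMatching

variable {m n K w : ℕ}

theorem abs_expect_sub_expect_le {ι : Type*} [Fintype ι] {f g h : ι → ℝ}
    (hfg : ∀ i, |f i - g i| ≤ h i) : |𝔼 i, f i - 𝔼 i, g i| ≤ 𝔼 i, h i := by
  rw [← expect_sub_distrib]
  exact (abs_expect_le _ _).trans (expect_le_expect fun i _ => hfg i)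

/-- The matching number of supply nodes `i ∈ S` in cells `c i` and demand nodes `j` in cells `d j`,
where nodes in compatible cells are joined. -/
def cellMatching (w : ℕ) (S : Finset (Fin m)) (c : Fin m → Fin K) (d : Fin n → Fin K) : ℕ :=
  matchingNumber fun i j => i ∈ S ∧ CellsNear w (c i) (d j)

theorem abs_cellMatching_sub_latticeMatching_le (S : Finset (Fin m)) (c : Fin m → Fin K)
    (d : Fin n → Fin K) :
    |(cellMatching w S c d : ℝ) - latticeMatching w (S.image c) (univ.image d)| ≤
      ((#S : ℝ) - #(S.image c)) + ((#(univ : Finset (Fin n)) : ℝ) - #(univ.image d)) := by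
  obtain ⟨S₀, hS₀, hc, hSc⟩ := exists_subset_injOn_image_eq S c
  obtain ⟨T₀, hT₀, hd, hTd⟩ := exists_subset_injOn_image_eq univ d
  rw [← hSc, ← hTd, card_image_of_injOn hc, card_image_of_injOn hd, ← cast_card_sdiff hS₀,
    ← cast_card_sdiff hT₀, latticeMatching,
    matchingNumber_image hc hd fun i j => CellsNear w i j]
  have lower : matchingNumber (fun i j => i ∈ S₀ ∧ j ∈ T₀ ∧ CellsNear w (c i) (d j)) ≤
      cellMatching w S c d :=
    matchingNumber_mono fun i j h => ⟨hS₀ h.1, h.2.2⟩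
  have upper : cellMatching w S c d ≤
      matchingNumber (fun i j => i ∈ S₀ ∧ j ∈ T₀ ∧ CellsNear w (c i) (d j)) +
        #(S \ S₀) + #(univ \ T₀) :=
    matchingNumber_le_add_verts _ _ fun i j h => by grind
  rw [abs_of_nonneg (sub_nonneg.2 (mod_cast lower)), sub_le_iff_le_add', ← add_assoc]
  exact_mod_cast upper

theorem abs_expect_cellMatching_sub_le [NeZero K] (w : ℕ) (S : Finset (Fin m)) :
    |𝔼 c : Fin m → Fin K, 𝔼 d : Fin n → Fin K, (cellMatching w S c d : ℝ) -
      𝔼 c : Fin m → Fin K, 𝔼 d : Fin n → Fin K,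
        (latticeMatching w (S.image c) (univ.image d) : ℝ)| ≤
      (m : ℝ) ^ 2 / K + (n : ℝ) ^ 2 / K := by
  refine (abs_expect_sub_expect_le fun c => abs_expect_sub_expect_le fun d =>
    abs_cellMatching_sub_latticeMatching_le S c d).trans ?_
  simp only [expect_add_distrib, Fintype.expect_const]
  simpa using add_le_add (expect_card_sub_card_image_le (ι := Fin K) S)
    (expect_card_sub_card_image_le (ι := Fin K) (univ : Finset (Fin n)))

theorem abs_expect_latticeMatching_sub_bandValue_le [NeZero K] {α β : ℝ} (hα₀ : 0 ≤ α)
    (hα₁ : α ≤ 1) (hβ₀ : 0 ≤ β) (hβ₁ : β ≤ 1) {S : Finset (Fin m)} (hS : #S ≤ K) (hn : n ≤ K) :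
    |𝔼 c : Fin m → Fin K, 𝔼 d : Fin n → Fin K,
        (latticeMatching w (S.image c) (univ.image d) : ℝ) - bandValue K w α β 0 0| ≤
      ((n : ℝ) ^ 2 / K + (√(K * β) + |K * β - n|)) +
        ((m : ℝ) ^ 2 / K + (√(K * α) + |K * α - #S|)) := by
  have demand (A : Finset (Fin K)) :=
    (cardLipschitz_latticeMatching_right w A).abs_expect_image_sub_bernoulliExpect_le hβ₀ hβ₁
      (S := (univ : Finset (Fin n))) (by simpa using hn)
  have supply := (cardLipschitz_bernoulliExpect hβ₀ hβ₁
    (cardLipschitz_latticeMatching_left (K := K) w)).abs_expect_image_sub_bernoulliExpect_le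
      hα₀ hα₁ (by simpa using hS)
  have demand_avg := abs_expect_sub_expect_le fun c : Fin m → Fin K => demand (S.image c)
  simp only [Fintype.expect_const, Fintype.card_fin, card_univ] at demand_avg supply
  simp only [bandValue, tail_zero]
  exact (abs_sub_le _ _ _).trans (add_le_add demand_avg supply)

/-- The pairs of cells whose compatibility does not determine whether their points are joined, for
one of the two service ranges. -/
def IsBoundaryPair (w x y : ℕ) : Prop :=
  x = y ∨ x + w = y ∨ y + w = x ∨ x + (w + 1) = y ∨ y + (w + 1) = x

/-- The pairs of nodes that lie in a boundary pair of cells. -/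
def boundaryPairs (w : ℕ) (c : Fin m → Fin K) (d : Fin n → Fin K) : Finset (Fin m × Fin n) :=
  {e | IsBoundaryPair w (c e.1) (d e.2)}

theorem card_isBoundaryPair_le (w x : ℕ) : #{y : Fin K | IsBoundaryPair w x y} ≤ 5 := by
  refine (card_le_card_of_injOn (t := {x, x + w, x - w, x + (w + 1), x - (w + 1)}) Fin.val
    (fun y hy => ?_) Fin.val_injective.injOn).trans card_le_five
  have hy := (mem_filter.1 hy).2
  simp only [IsBoundaryPair] at hy
  simp only [coe_insert, coe_singleton, Set.mem_insert_iff, Set.mem_singleton_iff]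
  omega

theorem expect_isBoundaryPair_apply_le (w x : ℕ) (j : Fin n) :
    𝔼 d : Fin n → Fin K, (if IsBoundaryPair w x (d j) then 1 else 0 : ℝ) ≤ 5 / K := by
  rw [expect_eq_expect_update j]
  have hcard : (#{y : Fin K | IsBoundaryPair w x y} : ℝ) ≤ 5 := mod_cast card_isBoundaryPair_le w x
  have hslice : 𝔼 y : Fin K, (if IsBoundaryPair w x y then 1 else 0 : ℝ) ≤ 5 / K := by
    rw [Fintype.expect_eq_sum_div_card, sum_boole, Fintype.card_fin]
    gcongr
  simp only [Function.update_self]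
  rcases isEmpty_or_nonempty (Fin n → Fin K)
  · simpa using div_nonneg (Nat.ofNat_nonneg 5) K.cast_nonneg
  · rwa [Fintype.expect_const]

theorem expect_card_boundaryPairs_le (w : ℕ) (c : Fin m → Fin K) :
    𝔼 d : Fin n → Fin K, (#(boundaryPairs w c d) : ℝ) ≤ 5 * (m * n / K) := by
  calc 𝔼 d : Fin n → Fin K, (#(boundaryPairs w c d) : ℝ)
      = ∑ e : Fin m × Fin n,
          𝔼 d : Fin n → Fin K, (if IsBoundaryPair w (c e.1) (d e.2) then 1 else 0 : ℝ) := by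
        simp only [boundaryPairs, ← sum_boole, expect_sum_comm]
    _ ≤ ∑ _e : Fin m × Fin n, 5 / (K : ℝ) :=
        sum_le_sum fun e _ => expect_isBoundaryPair_apply_le w _ e.2
    _ = 5 * (m * n / K) := by
        rw [sum_const, card_univ, Fintype.card_prod, Fintype.card_fin, Fintype.card_fin,
          nsmul_eq_mul, Nat.cast_mul]
        ring

end CellMatching

/-! ### Discretizing uniform points -/

section Discretization

variable {κ κ' : Type*} {K : ℕ}

/-- The index of the cell `[k / K, (k + 1) / K)` of `x ∈ [0, 1)`. The point `1` is put into the last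
cell. -/
def cellOf (K : ℕ) [NeZero K] (x : ℝ) : Fin K :=
  ⟨min ⌊K * x⌋₊ (K - 1), by have := NeZero.pos K; omega⟩

/-- The law of independent uniform points of `[0, 1]` indexed by `κ`. -/
def uniformPoints (κ : Type*) [Fintype κ] : Measure (κ → ℝ) :=
  Measure.pi fun _ => unifI

instance : IsProbabilityMeasure unifI :=
  ⟨by simp [unifI]⟩

instance [Fintype κ] : IsProbabilityMeasure (uniformPoints κ) :=
  inferInstanceAs (IsProbabilityMeasure (Measure.pi fun _ => unifI))

theorem ae_mem_Icc_uniformPoints [Fintype κ] :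
    ∀ᵐ S ∂uniformPoints κ, ∀ i, S i ∈ Set.Icc (0 : ℝ) 1 :=
  ae_all_iff.2 fun i => (Measure.tendsto_eval_ae_ae (μ := fun _ : κ => unifI) (i := i)).eventually
    (ae_restrict_mem measurableSet_Icc)

variable [NeZero K]

theorem measurable_cellOf : Measurable (cellOf K) :=
  (measurable_from_nat
    (f := fun k => (⟨min k (K - 1), by have := NeZero.pos K; omega⟩ : Fin K))).comp
    (Nat.measurable_floor.comp (measurable_const.mul measurable_id))

theorem mul_mem_Icc_cellOf {x : ℝ} (hx : x ∈ Set.Icc (0 : ℝ) 1) :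
    K * x ∈ Set.Icc ((cellOf K x : ℕ) : ℝ) ((cellOf K x : ℕ) + 1) := by
  have hKx : (K : ℝ) * x ≤ K := mul_le_of_le_one_right K.cast_nonneg hx.2
  have hfloor := Nat.floor_le (mul_nonneg (K.cast_nonneg (α := ℝ)) hx.1)
  refine ⟨le_trans (mod_cast min_le_left _ _) hfloor, ?_⟩
  rcases le_total ⌊(K : ℝ) * x⌋₊ (K - 1) with h | h
  · simpa only [cellOf, min_eq_left h] using (Nat.lt_floor_add_one _).le
  · simp only [cellOf, min_eq_right h]
    exact hKx.trans (mod_cast (by omega : K ≤ K - 1 + 1))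

theorem cellOf_eq_iff {x : ℝ} (hx : x ∈ Set.Ico (0 : ℝ) 1) (k : Fin K) :
    cellOf K x = k ↔ x ∈ Set.Ico ((k : ℝ) / K) ((k + 1) / K) := by
  have hK : (0 : ℝ) < K := mod_cast NeZero.pos K
  have hKx : 0 ≤ (K : ℝ) * x := mul_nonneg hK.le hx.1
  have hlt : ⌊(K : ℝ) * x⌋₊ < K := (Nat.floor_lt hKx).2 (mul_lt_of_lt_one_right hK hx.2)
  rw [cellOf, Fin.ext_iff, Fin.val_mk, min_eq_left (by omega), Nat.floor_eq_iff hKx, Set.mem_Ico,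
    div_le_iff₀' hK, lt_div_iff₀' hK]

theorem unifI_real_cellOf_preimage (k : Fin K) : unifI.real (cellOf K ⁻¹' {k}) = 1 / K := by
  have hK : (0 : ℝ) < K := mod_cast NeZero.pos K
  have hk : (k : ℝ) + 1 ≤ K := mod_cast k.2
  have hcell : cellOf K ⁻¹' {k} ∩ Set.Ico 0 1 = Set.Ico ((k : ℝ) / K) ((k + 1) / K) := by
    ext x
    refine ⟨fun hx => (cellOf_eq_iff hx.2 k).1 hx.1, fun hx => ?_⟩
    have hx01 : x ∈ Set.Ico (0 : ℝ) 1 :=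
      ⟨(by positivity : (0 : ℝ) ≤ k / K).trans hx.1, hx.2.trans_le ((div_le_one hK).2 hk)⟩
    exact ⟨(cellOf_eq_iff hx01 k).2 hx, hx01⟩
  rw [unifI, ← Measure.restrict_congr_set Ico_ae_eq_Icc,
    measureReal_restrict_apply (measurable_cellOf (measurableSet_singleton k)), hcell,
    Real.volume_real_Ico_of_le (by gcongr; linarith)]
  ring

theorem measurable_cellOf_comp : Measurable fun S : κ → ℝ => cellOf K ∘ S :=
  measurable_pi_lambda _ fun i => measurable_cellOf.comp (measurable_pi_apply i)

variable [Fintype κ] [Fintype κ']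

theorem uniformPoints_real_cellOf_preimage (c : κ → Fin K) :
    (uniformPoints κ).real ((fun S => cellOf K ∘ S) ⁻¹' {c}) = (1 / K) ^ Fintype.card κ := by
  have hpi : (fun S : κ → ℝ => cellOf K ∘ S) ⁻¹' {c} =
      Set.univ.pi fun i => cellOf K ⁻¹' {c i} := by
    ext S
    simp [funext_iff]
  rw [hpi, uniformPoints, measureReal_def, Measure.pi_pi, ENNReal.toReal_prod]
  simp only [← measureReal_def, unifI_real_cellOf_preimage, prod_const, card_univ]

theorem integral_comp_cellOf [DecidableEq κ] (G : (κ → Fin K) → ℝ) :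
    ∫ S, G (cellOf K ∘ S) ∂uniformPoints κ = 𝔼 c, G c := by
  have hmeas := measurable_cellOf_comp (κ := κ) (K := K)
  have : IsProbabilityMeasure ((uniformPoints κ).map fun S => cellOf K ∘ S) :=
    Measure.isProbabilityMeasure_map hmeas.aemeasurable
  rw [← integral_map hmeas.aemeasurable (f := G) Measurable.of_discrete.aestronglyMeasurable,
    integral_fintype .of_finite, Fintype.expect_eq_sum_div_card, sum_div]
  refine sum_congr rfl fun c _ => ?_
  rw [map_measureReal_apply hmeas (measurableSet_singleton c), uniformPoints_real_cellOf_preimage]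
  simp only [Fintype.card_fun, Fintype.card_fin, Nat.cast_pow, one_div, inv_pow, smul_eq_mul]
  ring

theorem integrable_comp_cellOf (C : (κ → Fin K) → (κ' → Fin K) → ℝ) :
    Integrable (fun z : (κ → ℝ) × (κ' → ℝ) => C (cellOf K ∘ z.1) (cellOf K ∘ z.2))
      ((uniformPoints κ).prod (uniformPoints κ')) := by
  have hmeas : Measurable fun z : (κ → ℝ) × (κ' → ℝ) => (cellOf K ∘ z.1, cellOf K ∘ z.2) :=
    (measurable_cellOf_comp.comp measurable_fst).prodMk
      (measurable_cellOf_comp.comp measurable_snd)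
  have : IsProbabilityMeasure (((uniformPoints κ).prod (uniformPoints κ')).map
      fun z => (cellOf K ∘ z.1, cellOf K ∘ z.2)) :=
    Measure.isProbabilityMeasure_map hmeas.aemeasurable
  have hC : Integrable (fun q : (κ → Fin K) × (κ' → Fin K) => C q.1 q.2)
      (((uniformPoints κ).prod (uniformPoints κ')).map
        fun z => (cellOf K ∘ z.1, cellOf K ∘ z.2)) :=
    .of_finite
  exact hC.comp_measurable hmeas

theorem abs_integral_sub_expect_le [DecidableEq κ] [DecidableEq κ'] {f : (κ → ℝ) → (κ' → ℝ) → ℝ}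
    {C B : (κ → Fin K) → (κ' → Fin K) → ℝ}
    (hf : Integrable (Function.uncurry f) ((uniformPoints κ).prod (uniformPoints κ')))
    (hfC : ∀ S D, (∀ i, S i ∈ Set.Icc (0 : ℝ) 1) → (∀ j, D j ∈ Set.Icc (0 : ℝ) 1) →
      |f S D - C (cellOf K ∘ S) (cellOf K ∘ D)| ≤ B (cellOf K ∘ S) (cellOf K ∘ D)) :
    |∫ S, ∫ D, f S D ∂uniformPoints κ' ∂uniformPoints κ - 𝔼 c, 𝔼 d, C c d| ≤
      𝔼 c, 𝔼 d, B c d := by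
  have expect_eq (C : (κ → Fin K) → (κ' → Fin K) → ℝ) : 𝔼 c, 𝔼 d, C c d =
      ∫ z : (κ → ℝ) × (κ' → ℝ), C (cellOf K ∘ z.1) (cellOf K ∘ z.2)
        ∂(uniformPoints κ).prod (uniformPoints κ') := by
    rw [integral_prod _ (integrable_comp_cellOf C), ← integral_comp_cellOf]
    simp only [integral_comp_cellOf]
  have hae : ∀ᵐ z ∂(uniformPoints κ).prod (uniformPoints κ'),
      (∀ i, z.1 i ∈ Set.Icc (0 : ℝ) 1) ∧ ∀ j, z.2 j ∈ Set.Icc (0 : ℝ) 1 :=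
    (Measure.quasiMeasurePreserving_fst.ae ae_mem_Icc_uniformPoints).and
      (Measure.quasiMeasurePreserving_snd.ae ae_mem_Icc_uniformPoints)
  have hint : ∫ S, ∫ D, f S D ∂uniformPoints κ' ∂uniformPoints κ =
      ∫ z, Function.uncurry f z ∂(uniformPoints κ).prod (uniformPoints κ') :=
    (integral_prod _ hf).symm
  rw [hint, expect_eq C, expect_eq B, ← integral_sub hf (integrable_comp_cellOf C),
    ← Real.norm_eq_abs]
  refine norm_integral_le_of_norm_le (integrable_comp_cellOf B) ?_
  filter_upwards [hae] with z hz
  exact hfC z.1 z.2 hz.1 hz.2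

end Discretization

/-! ### The dual service-range model with base range zero -/

section DualMatching

variable {m n K w : ℕ}

theorem cellsNear_or_isBoundaryPair_of_abs_sub_le {x y : ℕ} {X Y T : ℝ}
    (hX : X ∈ Set.Icc (x : ℝ) (x + 1)) (hY : Y ∈ Set.Icc (y : ℝ) (y + 1)) (hT : T < w + 1)
    (hXY : |X - Y| ≤ T) : CellsNear w x y ∨ IsBoundaryPair w x y := by
  obtain ⟨hlow, hupp⟩ := abs_le.1 hXY
  have hxy : (x : ℝ) < y + w + 2 := by linarith [hX.1, hY.2]
  have hyx : (y : ℝ) < x + w + 2 := by linarith [hX.2, hY.1]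
  norm_cast at hxy hyx
  unfold CellsNear IsBoundaryPair
  omega

theorem abs_sub_le_or_isBoundaryPair_of_cellsNear {x y : ℕ} {X Y T : ℝ}
    (hX : X ∈ Set.Icc (x : ℝ) (x + 1)) (hY : Y ∈ Set.Icc (y : ℝ) (y + 1)) (hT : w ≤ T)
    (hxy : CellsNear w x y) : |X - Y| ≤ T ∨ IsBoundaryPair w x y := by
  by_contra! h
  unfold CellsNear at hxy
  unfold IsBoundaryPair at h
  have hxy' : (x + 1 : ℝ) ≤ y + w := by norm_cast; omega
  have hyx' : (y + 1 : ℝ) ≤ x + w := by norm_cast; omega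
  exact h.1.not_ge (abs_le.2 ⟨by linarith [hX.1, hY.2], by linarith [hX.2, hY.1]⟩)

/-- The matching number of supply nodes at `S` and demand nodes at `D`, where the flexible supply
nodes `i ∈ F` have service range `R` and the others have service range `0`. -/
def dualMatching (F : Finset (Fin m)) (R : ℝ) (S : Fin m → ℝ) (D : Fin n → ℝ) : ℕ :=
  matchingNumber fun i j => |S i - D j| ≤ if i ∈ F then R else 0

theorem measurable_dualMatching (F : Finset (Fin m)) (R : ℝ) :
    Measurable fun z : (Fin m → ℝ) × (Fin n → ℝ) => dualMatching F R z.1 z.2 := by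
  have hadj : Measurable fun (z : (Fin m → ℝ) × (Fin n → ℝ)) (i : Fin m) (j : Fin n) =>
      |z.1 i - z.2 j| ≤ if i ∈ F then R else 0 :=
    measurable_pi_lambda _ fun i => measurable_pi_lambda _ fun j =>
      measurableSet_setOfPred.1 (measurableSet_le (by fun_prop) measurable_const)
  exact (Measurable.of_discrete (f := matchingNumber)).comp hadj

theorem integrable_dualMatching (F : Finset (Fin m)) (R : ℝ) :
    Integrable (Function.uncurry fun S D => (dualMatching F R S D : ℝ))
      ((uniformPoints (Fin m)).prod (uniformPoints (Fin n))) := by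
  have hmeas : Measurable (Function.uncurry fun (S : Fin m → ℝ) (D : Fin n → ℝ) =>
      (dualMatching F R S D : ℝ)) :=
    measurable_from_nat.comp (measurable_dualMatching F R)
  refine Integrable.of_bound hmeas.aestronglyMeasurable m (ae_of_all _ fun z => ?_)
  rw [Function.uncurry_def, Real.norm_natCast]
  exact_mod_cast matchingNumber_le_left _

theorem abs_dualMatching_sub_cellMatching_le [NeZero K] (F : Finset (Fin m)) {R : ℝ} (hR : 0 ≤ R)
    {S : Fin m → ℝ} {D : Fin n → ℝ} (hS : ∀ i, S i ∈ Set.Icc (0 : ℝ) 1)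
    (hD : ∀ j, D j ∈ Set.Icc (0 : ℝ) 1) :
    |(dualMatching F R S D : ℝ) - cellMatching ⌊K * R⌋₊ F (cellOf K ∘ S) (cellOf K ∘ D)| ≤
      #(boundaryPairs ⌊K * R⌋₊ (cellOf K ∘ S) (cellOf K ∘ D)) := by
  have hK : (0 : ℝ) < K := mod_cast NeZero.pos K
  have scale (i j) : |S i - D j| ≤ R ↔ |K * S i - K * D j| ≤ K * R := by
    rw [← mul_sub, abs_mul, abs_of_pos hK, mul_le_mul_iff_right₀ hK]
  have upper : dualMatching F R S D ≤ cellMatching ⌊K * R⌋₊ F (cellOf K ∘ S) (cellOf K ∘ D) +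
      #(boundaryPairs ⌊K * R⌋₊ (cellOf K ∘ S) (cellOf K ∘ D)) := by
    refine matchingNumber_le_add_edges _ fun i j hij => ?_
    rw [boundaryPairs, mem_filter_univ]
    by_cases hi : i ∈ F
    · rw [if_pos hi, scale] at hij
      exact (cellsNear_or_isBoundaryPair_of_abs_sub_le (mul_mem_Icc_cellOf (hS i))
        (mul_mem_Icc_cellOf (hD j)) (Nat.lt_floor_add_one _) hij).imp_left fun h => ⟨hi, h⟩
    · rw [if_neg hi, abs_nonpos_iff, sub_eq_zero] at hij
      exact .inr (.inl (by simp only [Function.comp_apply, hij]))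
  have lower : cellMatching ⌊K * R⌋₊ F (cellOf K ∘ S) (cellOf K ∘ D) ≤ dualMatching F R S D +
      #(boundaryPairs ⌊K * R⌋₊ (cellOf K ∘ S) (cellOf K ∘ D)) := by
    refine matchingNumber_le_add_edges _ fun i j ⟨hi, hij⟩ => ?_
    rw [boundaryPairs, mem_filter_univ, if_pos hi, scale]
    exact abs_sub_le_or_isBoundaryPair_of_cellsNear (mul_mem_Icc_cellOf (hS i))
      (mul_mem_Icc_cellOf (hD j)) (Nat.floor_le (by positivity)) hij
  rw [abs_sub_le_iff, sub_le_iff_le_add', sub_le_iff_le_add']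
  exact_mod_cast And.intro upper lower

theorem abs_integral_dualMatching_sub_bandValue_le [NeZero K] (F : Finset (Fin m)) {R α β : ℝ}
    (hR : 0 ≤ R) (hα₀ : 0 ≤ α) (hα₁ : α ≤ 1) (hβ₀ : 0 ≤ β) (hβ₁ : β ≤ 1) (hF : #F ≤ K)
    (hn : n ≤ K) :
    |∫ S, ∫ D, (dualMatching F R S D : ℝ) ∂uniformPoints (Fin n) ∂uniformPoints (Fin m) -
        bandValue K ⌊K * R⌋₊ α β 0 0| ≤
      5 * (m * n / K) + (m ^ 2 / K + n ^ 2 / K) +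
        ((n ^ 2 / K + (√(K * β) + |K * β - n|)) + (m ^ 2 / K + (√(K * α) + |K * α - #F|))) := by
  have boundary : 𝔼 c : Fin m → Fin K, 𝔼 d : Fin n → Fin K,
      (#(boundaryPairs ⌊K * R⌋₊ c d) : ℝ) ≤ 5 * (m * n / K) :=
    (expect_le_expect fun c _ => expect_card_boundaryPairs_le ⌊K * R⌋₊ c).trans_eq
      (Fintype.expect_const _)
  have discretize := (abs_integral_sub_expect_le
    (C := fun c d => (cellMatching ⌊K * R⌋₊ F c d : ℝ))
    (B := fun c d => (#(boundaryPairs ⌊K * R⌋₊ c d) : ℝ)) (integrable_dualMatching F R)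
    fun S D hS hD => abs_dualMatching_sub_cellMatching_le F hR hS hD).trans boundary
  have separate := abs_expect_cellMatching_sub_le (n := n) (K := K) ⌊K * R⌋₊ F
  have poissonize := abs_expect_latticeMatching_sub_bandValue_le (w := ⌊K * R⌋₊) hα₀ hα₁ hβ₀ hβ₁
    hF hn
  exact (abs_sub_le _ _ _).trans
    (add_le_add ((abs_sub_le _ _ _).trans (add_le_add discretize separate)) poissonize)

end DualMatching

/-! ### Asymptotics -/

section Limit

variable {n : ℕ} {b p q : ℝ}

/-- The supply nodes with the larger service range in the dual service-range model. -/
def flexibleNodes (n : ℕ) (p : ℝ) : Finset (Fin n) :=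
  {i | (i : ℕ) < ⌊p * n⌋₊}

theorem abs_mul_sub_card_flexibleNodes_le (hp₀ : 0 ≤ p) (hp₁ : p ≤ 1) :
    |p * n - #(flexibleNodes n p)| ≤ 1 := by
  have hfloor : ⌊p * n⌋₊ ≤ n :=
    Nat.floor_le_of_le (mul_le_of_le_one_left n.cast_nonneg hp₁)
  rw [flexibleNodes, Fin.card_filter_val_lt, min_eq_right hfloor, abs_sub_le_iff]
  constructor <;>
    linarith [Nat.floor_le (mul_nonneg hp₀ n.cast_nonneg), Nat.lt_floor_add_one (p * n)]

theorem nuDual_zero_eq_integral_dualMatching (n : ℕ) (b p : ℝ) :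
    nuDual n 0 b p = ∫ S, ∫ D, (dualMatching (flexibleNodes n p) (b / n) S D : ℝ)
      ∂uniformPoints (Fin n) ∂uniformPoints (Fin n) := by
  simp only [nuDual, dualMatching, flexibleNodes, uniformPoints, mem_filter_univ, zero_add,
    ite_div, zero_div]

theorem abs_nuDual_zero_sub_bandValue_le [NeZero n] (hb : 0 ≤ b) (hp₀ : 0 ≤ p) (hp₁ : p ≤ 1) :
    |nuDual n 0 b p - bandValue (n ^ 2) ⌊b * n⌋₊ (p / n) (1 / n) 0 0| ≤ 10 + 2 * √n := by
  have hn : (1 : ℝ) ≤ n := mod_cast NeZero.one_le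
  have hn₀ : (n : ℝ) ≠ 0 := NeZero.ne _
  have hle : n ≤ n ^ 2 := Nat.le_self_pow two_ne_zero n
  have hrange : ((n ^ 2 : ℕ) : ℝ) * (b / n) = b * n := by push_cast; field_simp
  have hsupply : ((n ^ 2 : ℕ) : ℝ) * (p / n) = p * n := by push_cast; field_simp
  have hdemand : ((n ^ 2 : ℕ) : ℝ) * (1 / n) = n := by push_cast; field_simp
  have hcollide : (n : ℝ) ^ 2 / (n ^ 2 : ℕ) = 1 := by push_cast; field_simp
  have hbound := abs_integral_dualMatching_sub_bandValue_le (n := n) (K := n ^ 2)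
    (flexibleNodes n p) (R := b / n) (α := p / n) (β := 1 / n) (by positivity) (by positivity)
    ((div_le_one₀ (by positivity)).2 (hp₁.trans hn)) (by positivity)
    ((div_le_one₀ (by positivity)).2 hn) ((card_finset_fin_le _).trans hle) hle
  rw [← nuDual_zero_eq_integral_dualMatching, hrange, hsupply, hdemand, ← sq, hcollide, sub_self,
    abs_zero] at hbound
  have hsqrt : √(p * n) ≤ √n := Real.sqrt_le_sqrt (mul_le_of_le_one_left n.cast_nonneg hp₁)
  linarith [abs_mul_sub_card_flexibleNodes_le (n := n) hp₀ hp₁]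

theorem abs_nuDual_zero_sub_latticeGain_le (hn : 2 ≤ n) (hb : 0 ≤ b) (hp₀ : 0 ≤ p)
    (hp₁ : p < 1) :
    |nuDual n 0 b p - latticeGain ⌊b * n⌋₊ (p / n) (1 / n) * (n : ℝ) ^ 2| ≤
      10 + 2 * √n + 4 * (2 + b) / (1 - p) ^ 2 := by
  have : NeZero n := ⟨by omega⟩
  have hn₂ : (2 : ℝ) ≤ n := mod_cast hn
  have hn₀ : (0 : ℝ) < n := by linarith
  have hlattice := abs_bandValue_sub_latticeGain_mul_le (w := ⌊b * n⌋₊) (α := p / n)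
    (β := 1 / n) (n ^ 2) (by positivity) (by gcongr) ((div_lt_one hn₀).2 (by linarith))
  have hwidth : 1 + 1 / (n : ℝ) * (⌊b * n⌋₊ + 1) ≤ 2 + b := by
    have hfloor : (⌊b * n⌋₊ : ℝ) ≤ b * n := Nat.floor_le (by positivity)
    rw [one_div_mul_eq_div, ← le_sub_iff_add_le', div_le_iff₀ hn₀]
    linarith
  have hscale : 1 / (n : ℝ) / (1 / n - p / n) = 1 / (1 - p) := by
    rw [← sub_div, div_div_div_cancel_right₀ hn₀.ne']
  rw [hscale, one_div_pow, mul_one_div, Nat.cast_pow] at hlattice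
  have hbias : 4 * (1 + 1 / (n : ℝ) * (⌊b * n⌋₊ + 1)) / (1 - p) ^ 2 ≤
      4 * (2 + b) / (1 - p) ^ 2 := by gcongr
  exact (abs_sub_le _ _ _).trans
    (add_le_add (abs_nuDual_zero_sub_bandValue_le hb hp₀ hp₁.le) (hlattice.trans hbias))

theorem tendsto_nuDual_zero_div_sub (hb : 0 ≤ b) (hp₀ : 0 ≤ p) (hp₁ : p < 1) :
    Tendsto (fun n : ℕ => nuDual n 0 b p / n - n * latticeGain ⌊b * n⌋₊ (p / n) (1 / n)) atTop
      (𝓝 0) := by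
  have hinv : Tendsto (fun n : ℕ => (n : ℝ)⁻¹) atTop (𝓝 0) :=
    tendsto_inv_atTop_nhds_zero_nat
  have hlim : Tendsto (fun n : ℕ => (10 + 4 * (2 + b) / (1 - p) ^ 2) * (n : ℝ)⁻¹ + 2 * √(n : ℝ)⁻¹)
      atTop (𝓝 0) := by
    simpa using (hinv.const_mul _).add (hinv.sqrt.const_mul 2)
  refine squeeze_zero_norm' ?_ hlim
  filter_upwards [eventually_ge_atTop 2] with n hn
  have hn₀ : (0 : ℝ) < n := mod_cast (by omega : 0 < n)
  have hdiff : nuDual n 0 b p / n - n * latticeGain ⌊b * n⌋₊ (p / n) (1 / n) =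
      (nuDual n 0 b p - latticeGain ⌊b * n⌋₊ (p / n) (1 / n) * (n : ℝ) ^ 2) / n := by
    field_simp
  rw [hdiff, Real.norm_eq_abs, abs_div, abs_of_pos hn₀, Real.sqrt_inv, ← Real.sqrt_div_self,
    ← div_eq_mul_inv, ← mul_div_assoc, ← add_div]
  gcongr
  linarith [abs_nuDual_zero_sub_latticeGain_le hn hb hp₀ hp₁]

theorem tendsto_mul_one_sub_div_one_sub_sub_one (p q : ℝ) :
    Tendsto (fun n : ℕ => (n : ℝ) * ((1 - q / n) / (1 - p / n) - 1)) atTop (𝓝 (p - q)) := by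
  have hlim : Tendsto (fun n : ℕ => (p - q) / (1 - p / n)) atTop (𝓝 (p - q)) := by
    simpa [Pi.div_def] using (tendsto_const_nhds (x := p - q)).div
      ((tendsto_const_div_atTop_nhds_zero_nat p).const_sub 1) (by simp)
  refine hlim.congr' ?_
  filter_upwards [eventually_gt_atTop 0, eventually_gt_atTop ⌈p⌉₊] with n hn hpn
  have hn₀ : (n : ℝ) ≠ 0 := by positivity
  have hpn₀ : (n : ℝ) - p ≠ 0 := sub_ne_zero.2 (Nat.lt_of_ceil_lt hpn).ne'
  rw [one_sub_div hn₀, one_sub_div hn₀]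
  field_simp
  ring

theorem tendsto_two_mul_floor_add_one_div (hb : 0 ≤ b) :
    Tendsto (fun n : ℕ => ((2 * ⌊b * n⌋₊ + 1 : ℕ) : ℝ) / n) atTop (𝓝 (2 * b)) := by
  have hfloor := (tendsto_nat_floor_mul_div_atTop hb).comp (tendsto_natCast_atTop_atTop (R := ℝ))
  have hlim := (hfloor.const_mul 2).add (tendsto_const_div_atTop_nhds_zero_nat (1 : ℝ))
  rw [add_zero] at hlim
  refine hlim.congr fun n => ?_
  push_cast [Function.comp_apply]
  ring

theorem tendsto_bandRatio (hb : 0 ≤ b) (p q : ℝ) :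
    Tendsto (fun n : ℕ => bandRatio ⌊b * n⌋₊ (p / n) (q / n)) atTop
      (𝓝 (Real.exp ((p - q) * (2 * b)))) := by
  have hpow := (Real.tendsto_one_add_pow_exp_of_tendsto
    (tendsto_mul_one_sub_div_one_sub_sub_one p q)).rpow (tendsto_two_mul_floor_add_one_div hb)
      (.inl (Real.exp_pos _).ne')
  rw [← Real.exp_mul] at hpow
  refine hpow.congr' ?_
  filter_upwards [eventually_gt_atTop 0, eventually_ge_atTop ⌈p⌉₊, eventually_ge_atTop ⌈q⌉₊]
    with n hn hpn hqn
  have hn₀ : (0 : ℝ) < n := mod_cast hn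
  have hratio : 0 ≤ (1 - q / n) / (1 - p / n) :=
    div_nonneg (sub_nonneg.2 ((div_le_one hn₀).2 (Nat.ceil_le.1 hqn)))
      (sub_nonneg.2 ((div_le_one hn₀).2 (Nat.ceil_le.1 hpn)))
  rw [add_sub_cancel, bandRatio, ← Real.rpow_natCast, ← Real.rpow_mul hratio,
    mul_div_cancel₀ _ hn₀.ne', Real.rpow_natCast]

theorem tendsto_mul_latticeGain (hb : 0 ≤ b) (hp : 0 ≤ p) (hpq : p < q) :
    Tendsto (fun n : ℕ => n * latticeGain ⌊b * n⌋₊ (p / n) (q / n)) atTop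
      (𝓝 (p * q * (1 - Real.exp ((p - q) * (2 * b))) /
        (q - p * Real.exp ((p - q) * (2 * b))))) := by
  have hR := tendsto_bandRatio hb p q
  have hexp : Real.exp ((p - q) * (2 * b)) ≤ 1 :=
    Real.exp_le_one_iff.2 (mul_nonpos_of_nonpos_of_nonneg (by linarith) (by linarith))
  have hden : q - p * Real.exp ((p - q) * (2 * b)) ≠ 0 := by
    have := mul_le_of_le_one_right hp hexp
    linarith
  refine (((hR.const_sub 1).const_mul (p * q)).div
    ((hR.const_mul p).const_sub q) hden).congr' ?_
  filter_upwards [eventually_gt_atTop 0] with n hn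
  rw [latticeGain, Pi.div_apply]
  field_simp

theorem exp_sub_exp_div_exp_sub_exp (b : ℝ) (hp : p ≠ 0) :
    (Real.exp (2 * p * b) - Real.exp (2 * b)) /
        (Real.exp (2 * p * b) - (1 / p) * Real.exp (2 * b)) =
      p * (1 - Real.exp ((p - 1) * (2 * b))) / (1 - p * Real.exp ((p - 1) * (2 * b))) := by
  have hsplit : Real.exp (2 * p * b) = Real.exp ((p - 1) * (2 * b)) * Real.exp (2 * b) := by
    rw [← Real.exp_add]
    ring_nf
  rw [hsplit, ← sub_one_mul, ← sub_mul, mul_div_mul_right _ _ (Real.exp_pos _).ne',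
    ← mul_div_mul_left _ _ (neg_ne_zero.2 hp)]
  congr 1
  · ring
  · field_simp
    ring

end Limit

/-- **Exact matching rate in the dual service-range model with zero base range.**
Fix `b > 0` and `p ∈ (0,1)`. Then
`lim_{n→∞} ν_n(0, b, p)/n = (e^{2pb} - e^{2b}) / (e^{2pb} - (1/p) e^{2b})`. -/
theorem dual_service_range_zero_base (b p : ℝ) (hb : 0 < b) (hp : p ∈ Set.Ioo (0 : ℝ) 1) :
    Filter.Tendsto (fun n : ℕ => nuDual n 0 b p / n) Filter.atTop
      (nhds ((Real.exp (2 * p * b) - Real.exp (2 * b)) /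
        (Real.exp (2 * p * b) - (1 / p) * Real.exp (2 * b)))) := by
  have hgain := tendsto_mul_latticeGain hb.le hp.1.le hp.2
  rw [mul_one, ← exp_sub_exp_div_exp_sub_exp b hp.1.ne'] at hgain
  simpa using (tendsto_nuDual_zero_div_sub hb.le hp.1.le hp.2).add hgain

end
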